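/- arXiv:0807.3278 — 2 statements merged into one kernel-verified Lean document; each statement's English description precedes it below -/
import Mathlib

section
/- Let g be a real semisimple Lie algebra and X ∈ g a semisimple element (ad(X) diagonalizable over ℂ). Then there exists a Cartan involution θ of g with Cartan decomposition g = k ⊕ s such that X = E + H with H ∈ s, E ∈ k, and [E, H] = 0. -/
/-!
Realise the Lie algebra as a bracket `μ` on a Euclidean space for which `D = ad X` is a normal
operator; this is possible because, in eigencoordinates of `ad X`, complex conjugation of the
eigenvalues is given by a real polynomial, so the adjoint of `ad X` is a polynomial in `ad X`.

Among the brackets in the closure of the orbit of `μ` under the centraliser of `D` in `SL`, take one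
of least norm. The discriminant of the Killing form is constant on this closure, so the minimiser is
still semisimple; the second cohomology of a semisimple Lie algebra with adjoint coefficients
vanishes (a Casimir homotopy), so its isomorphism class is open among the brackets having `D` as a
derivation, and the minimiser is conjugate to `μ` by an operator commuting with `D`.

At a minimiser the moment map `A ↦ ⟪A • μ, μ⟫` is a multiple of the trace (Kempf–Ness). It follows
that the adjoint of every derivation is a derivation, hence inner. So `ad` has `*`-closed range, and
`ad (θ Y) = -(ad Y)*` defines a Cartan involution. As `ad X` is normal, `X` commutes with `θ X`, and
`E = (X + θ X) / 2`, `H = (X - θ X) / 2`.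
-/

set_option maxSynthPendingDepth 3

section DualFamilies

variable {K U M ι : Type*} [CommRing K] [AddCommGroup U] [Module K U] [AddCommGroup M] [Module K M]
  [Fintype ι]

theorem sum_apply_left_eq_sum_apply_right_of_adjoint {e f : ι → U} {B : LinearMap.BilinForm K U}
    (he : ∀ x, ∑ i, B x (f i) • e i = x) (hf : ∀ x, ∑ i, B (e i) x • f i = x)
    {S T : U → U} (hST : ∀ x y, B (S x) y = B x (T y)) (β : U →ₗ[K] U →ₗ[K] M) :
    ∑ i, β (S (e i)) (f i) = ∑ i, β (e i) (T (f i)) := by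
  calc ∑ i, β (S (e i)) (f i)
      = ∑ i, ∑ j, B (S (e i)) (f j) • β (e j) (f i) := by
        refine Finset.sum_congr rfl fun i _ => ?_
        conv_lhs => rw [← he (S (e i))]
        simp
    _ = ∑ j, ∑ i, B (e i) (T (f j)) • β (e j) (f i) := by
        rw [Finset.sum_comm]
        simp_rw [hST]
    _ = ∑ j, β (e j) (T (f j)) := by
        refine Finset.sum_congr rfl fun j _ => ?_
        conv_rhs => rw [← hf (T (f j))]
        simp

end DualFamilies

section Whitehead

open LieModule.Cohomology

variable {K L M : Type*} [Field K] [LieRing L] [LieAlgebra K L] [LieAlgebra.IsKilling K L]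
  [AddCommGroup M] [Module K M]

section DualBasis

variable {ι : Type*} [Finite ι] [DecidableEq ι]

variable (K) in
/-- The basis of a Killing Lie algebra dual to `b` with respect to the Killing form. -/
noncomputable def killingDualBasis (b : Module.Basis ι K L) : Module.Basis ι K L :=
  (killingForm K L).dualBasis (LieAlgebra.IsKilling.killingForm_nondegenerate K L) b

variable (b : Module.Basis ι K L)

theorem killingDualBasis_repr_apply (x : L) (i : ι) :
    (killingDualBasis K b).repr x i = killingForm K L x (b i) :=
  LinearMap.BilinForm.dualBasis_repr_apply _ _ _ _

theorem repr_apply_eq_killingForm_killingDualBasis (x : L) (i : ι) :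
    b.repr x i = killingForm K L (killingDualBasis K b i) x := by
  cases nonempty_fintype ι
  conv_rhs => rw [← b.sum_repr x]
  simp only [killingDualBasis, map_sum, map_smul, LinearMap.BilinForm.apply_dualBasis_left,
    smul_eq_mul, mul_ite, mul_one, mul_zero, Fintype.sum_ite_eq']

variable [Fintype ι]

theorem sum_apply_killingDualBasis_lie (β : L →ₗ[K] L →ₗ[K] M) (z : L) :
    ∑ i, β ⁅killingDualBasis K b i, z⁆ (b i) = ∑ i, β (killingDualBasis K b i) ⁅z, b i⁆ :=
  sum_apply_left_eq_sum_apply_right_of_adjoint (B := killingForm K L)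
    (S := fun x => ⁅x, z⁆) (T := fun x => ⁅z, x⁆)
    (fun x => by simp_rw [← killingDualBasis_repr_apply, Module.Basis.sum_repr])
    (fun x => by simp_rw [← repr_apply_eq_killingForm_killingDualBasis, Module.Basis.sum_repr])
    (fun x y => LieModule.traceForm_apply_lie_apply K L L x z y) β

theorem sum_killingDualBasis_lie_lie (x : L) :
    ∑ i, ⁅killingDualBasis K b i, ⁅b i, x⁆⁆ = x := by
  have killingForm_lie (u v w : L) : killingForm K L ⁅u, v⁆ w = killingForm K L u ⁅v, w⁆ :=
    LieModule.traceForm_apply_lie_apply K L L u v w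
  have trace_formula (y : L) :
      killingForm K L x y = ∑ i, killingForm K L (killingDualBasis K b i) ⁅y, ⁅x, b i⁆⁆ := by
    rw [LieModule.traceForm_comm]
    simp_rw [← repr_apply_eq_killingForm_killingDualBasis, killingForm_apply_apply,
      LinearMap.trace_eq_matrix_trace K b, Matrix.trace, Matrix.diag_apply,
      LinearMap.toMatrix_apply, LinearMap.comp_apply, LieAlgebra.ad_apply]
  refine sub_eq_zero.mp <| (LieAlgebra.IsKilling.killingForm_nondegenerate K L).1 _ fun y => ?_
  rw [map_sub, LinearMap.sub_apply, sub_eq_zero, trace_formula, map_sum, LinearMap.sum_apply]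
  refine Finset.sum_congr rfl fun i _ => ?_
  rw [killingForm_lie, ← lie_skew, ← lie_skew (b i) x, lie_neg, neg_neg]

end DualBasis

variable [Module.Finite K L] [LieRingModule L M] [LieModule K L M]

/-- The contracting homotopy `C²(L, M) → C¹(L, M)` in Whitehead's second lemma: contraction of a
bilinear map with the Casimir tensor `∑ i, b' i ⊗ b i` of the Killing form, the first factor acting
on `M`. -/
noncomputable def casimirHomotopy (f : L →ₗ[K] L →ₗ[K] M) : L →ₗ[K] M :=
  ∑ i, LieModule.toEnd K L M (killingDualBasis K (Module.finBasis K L) i) ∘ₗ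
    f (Module.finBasis K L i)

theorem casimirHomotopy_apply (f : L →ₗ[K] L →ₗ[K] M) (x : L) :
    casimirHomotopy f x =
      ∑ i, ⁅killingDualBasis K (Module.finBasis K L) i, f (Module.finBasis K L i) x⁆ := by
  simp [casimirHomotopy]

theorem lie_casimirHomotopy (z : L) (f : L →ₗ[K] L →ₗ[K] M) :
    ⁅z, casimirHomotopy f⁆ = casimirHomotopy ⁅z, f⁆ := by
  ext x
  have casimir_invariant := sum_apply_killingDualBasis_lie (Module.finBasis K L)
    ((LieModule.toEnd K L M : L →ₗ[K] Module.End K M).compl₂ (f.flip x)) z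
  simp only [LinearMap.compl₂_apply, LieHom.coe_toLinearMap, LinearMap.flip_apply,
    LieModule.toEnd_apply_apply, lie_lie, Finset.sum_sub_distrib] at casimir_invariant
  simp only [LieHom.lie_apply, casimirHomotopy_apply, LinearMap.sub_apply, lie_sub, lie_sum,
    Finset.sum_sub_distrib, ← casimir_invariant]
  abel

theorem d₁₂_casimirHomotopy_apply (f : twoCochain K L M) (hf : f ∈ twoCocycle K L M) (y z : L) :
    d₁₂ K L M (casimirHomotopy f.1) y z = ∑ i, ⁅killingDualBasis K (Module.finBasis K L) i,
      ⁅Module.finBasis K L i, f y z⁆⁆ := by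
  have lie_homotopy (u v : L) : ⁅u, casimirHomotopy f.1 v⁆ =
      casimirHomotopy f.1 ⁅u, v⁆ + casimirHomotopy ⁅u, f.1⁆ v := by
    rw [← lie_casimirHomotopy, LieHom.lie_apply, add_sub_cancel]
  have cocycle (x : L) := congr($((mem_twoCocycle_iff _ _ _ f).mp hf) x y z)
  rw [d₁₂_apply_apply, lie_homotopy, lie_homotopy]
  simp only [casimirHomotopy_apply, ← Finset.sum_add_distrib, ← Finset.sum_sub_distrib, ← lie_add,
    ← lie_sub]
  refine Finset.sum_congr rfl fun i _ => congrArg _ ?_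
  specialize cocycle (Module.finBasis K L i)
  simp only [LieHom.lie_apply, LinearMap.sub_apply, twoCochain_val_apply, d₂₃_apply,
    LinearMap.zero_apply] at cocycle ⊢
  rw [← sub_eq_zero, ← neg_eq_zero, ← cocycle, ← lie_skew y (Module.finBasis K L i),
    ← lie_skew z (Module.finBasis K L i), ← lie_skew z y, ← twoCochain_skew f _ ⁅y, z⁆]
  simp only [map_neg, LinearMap.neg_apply]
  abel

theorem d₁₂_casimirHomotopy_of_mem_twoCocycle (f : twoCochain K L L) (hf : f ∈ twoCocycle K L L) :
    d₁₂ K L L (casimirHomotopy f.1) = f := by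
  ext y z
  exact (d₁₂_casimirHomotopy_apply f hf y z).trans (sum_killingDualBasis_lie_lie _ _)

end Whitehead

section OpenOrbit

open Filter Topology

variable {P W Z : Type*} [NormedAddCommGroup P] [NormedSpace ℝ P] [CompleteSpace P]
  [NormedAddCommGroup W] [NormedSpace ℝ W] [FiniteDimensional ℝ W]
  [NormedAddCommGroup Z] [NormedSpace ℝ Z]

theorem eventually_eq_zero_of_injective_fderiv {J : W → Z} {J' : W →L[ℝ] Z}
    (hJ : HasFDerivAt J J' 0) (hJ' : J'.ker = ⊥) : ∀ᶠ w in 𝓝 0, J w = 0 → w = 0 := by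
  obtain ⟨C, -, hC⟩ := (J' : W →ₗ[ℝ] Z).exists_antilipschitzWith hJ'
  filter_upwards [eventually_nhdsWithin_iff.mp (hJ.eventually_ne (c := 0) ⟨C, hC⟩)] with w hw
  exact not_imp_not.mp hw

theorem map_nhds_slice_of_codisjoint {Φ : P × W → W} {δ : P →L[ℝ] W} {ν : W}
    (hΦ : HasStrictFDerivAt Φ (δ.coprod (.id ℝ W)) (0, ν)) {C : Submodule ℝ W}
    (hC : Codisjoint δ.range C) :
    map (fun p : P × C => Φ (p.1, ν + p.2)) (𝓝 0) = 𝓝 (Φ (0, ν)) := by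
  have := FiniteDimensional.complete ℝ W
  have := FiniteDimensional.complete ℝ C
  have slice : HasStrictFDerivAt (fun p : P × C => (p.1, ν + (p.2 : W)))
      ((ContinuousLinearMap.id ℝ P).prodMap C.subtypeL) 0 :=
    hasStrictFDerivAt_fst.prodMk
      ((C.subtypeL.hasStrictFDerivAt.comp _ hasStrictFDerivAt_snd).const_add ν)
  have hΨ := HasStrictFDerivAt.comp (g := Φ) (0 : P × C) (by simpa using hΦ) slice
  simpa using hΨ.map_nhds_eq_of_surj <| LinearMap.range_eq_top.mpr fun w => by
    obtain ⟨-, c, ⟨A, rfl⟩, hc, rfl⟩ := Submodule.codisjoint_iff_exists_add_eq.mp hC w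
    exact ⟨(A, ⟨c, hc⟩), rfl⟩

-- Infinitesimal exactness makes the orbit of `ν` a neighbourhood of `ν` in the zero locus of `J`:
-- near `ν` every point is `Φ (A, ν + c)` with `c` in a complement of `ker J'`, on which `J` has no
-- zero near `ν` other than `ν` itself.
theorem eventually_exists_apply_eq_of_ker_le_range {Φ : P × W → W} {δ : P →L[ℝ] W} {ν : W}
    (hΦ : HasStrictFDerivAt Φ (δ.coprod (.id ℝ W)) (0, ν)) (hΦν : Φ (0, ν) = ν)
    {J : W → Z} {J' : W →L[ℝ] Z} (hJ : HasFDerivAt J J' ν)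
    (hJΦ : ∀ A w, J (Φ (A, w)) = 0 → J w = 0) (exact : J'.ker ≤ δ.range) :
    ∀ᶠ μ in 𝓝 ν, J μ = 0 → ∃ A, Φ (A, ν) = μ := by
  obtain ⟨C, hC⟩ := J'.ker.exists_isCompl
  have transversal : ∀ᶠ c : C in 𝓝 0, J (ν + c) = 0 → c = 0 := by
    refine eventually_eq_zero_of_injective_fderiv (J' := J' ∘L C.subtypeL)
      (HasFDerivAt.comp 0 (by simpa using hJ) (C.subtypeL.hasFDerivAt.const_add ν)) ?_
    exact LinearMap.ker_eq_bot'.mpr fun c hc =>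
      Subtype.ext (Submodule.disjoint_def.mp hC.disjoint c hc c.2)
  have map_nhds := map_nhds_slice_of_codisjoint hΦ (hC.codisjoint.mono_left exact)
  rw [hΦν] at map_nhds
  rw [← map_nhds, eventually_map]
  filter_upwards [(continuous_snd.tendsto (0 : P × C)).eventually transversal] with ⟨A, c⟩ hc hJ
  obtain rfl : c = 0 := hc (hJΦ A _ hJ)
  exact ⟨A, by simp⟩

end OpenOrbit

/-- Continuous bilinear operations on `V`; a Lie algebra structure on `V` is a point of this space
satisfying `BilinOp.IsLie`. -/
abbrev BilinOp (V : Type*) [NormedAddCommGroup V] [NormedSpace ℝ V] : Type _ :=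
  V →L[ℝ] V →L[ℝ] V

namespace BilinOp

section Action

variable {V : Type*} [NormedAddCommGroup V] [NormedSpace ℝ V]

/-- The infinitesimal action of `End V` on bilinear operations. In particular `D` is a derivation of
`ν` exactly when `derivAct D ν = 0`. -/
noncomputable def derivAct : (V →L[ℝ] V) →L[ℝ] BilinOp V →L[ℝ] BilinOp V :=
  .compL ℝ V _ _ ∘L .compL ℝ V V V - (ContinuousLinearMap.compL ℝ V V _).flip -
    .compL ℝ V _ _ ∘L (ContinuousLinearMap.compL ℝ V V V).flip

@[simp]
theorem derivAct_apply (A : V →L[ℝ] V) (ν : BilinOp V) (x y : V) :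
    derivAct A ν x y = A (ν x y) - ν (A x) y - ν x (A y) :=
  rfl

/-- `derivAct` with its arguments exchanged: `orbitDeriv ν` is the derivative at the identity of the
orbit map `g ↦ transport g ν`. -/
noncomputable def orbitDeriv : BilinOp V →L[ℝ] (V →L[ℝ] V) →L[ℝ] BilinOp V :=
  derivAct.flip

@[simp]
theorem orbitDeriv_apply (ν : BilinOp V) (A : V →L[ℝ] V) : orbitDeriv ν A = derivAct A ν :=
  rfl

theorem derivAct_eq_zero_iff {D : V →L[ℝ] V} {ν : BilinOp V} :
    derivAct D ν = 0 ↔ ∀ x y, D (ν x y) = ν (D x) y + ν x (D y) := by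
  simp only [ContinuousLinearMap.ext_iff, derivAct_apply, zero_apply, sub_sub,
    sub_eq_zero]

theorem derivAct_lie (A B : V →L[ℝ] V) (ν : BilinOp V) :
    derivAct ⁅A, B⁆ ν = derivAct A (derivAct B ν) - derivAct B (derivAct A ν) := by
  ext x y
  simp only [Ring.lie_def, derivAct_apply, sub_apply, mul_apply_eq_comp,
    ContinuousLinearMap.map_sub]
  abel

/-- The action of `GL V` on bilinear operations by transport of structure. -/
noncomputable def transport (g : V ≃L[ℝ] V) : BilinOp V ≃L[ℝ] BilinOp V :=
  g.arrowCongr (g.arrowCongr g)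

@[simp]
theorem transport_apply (g : V ≃L[ℝ] V) (ν : BilinOp V) (x y : V) :
    transport g ν x y = g (ν (g.symm x) (g.symm y)) :=
  rfl

theorem transport_one (ν : BilinOp V) : transport 1 ν = ν :=
  rfl

theorem transport_mul (g h : V ≃L[ℝ] V) (ν : BilinOp V) :
    transport (g * h) ν = transport g (transport h ν) :=
  rfl

theorem derivAct_transport (A : V →L[ℝ] V) (g : V ≃L[ℝ] V) (ν : BilinOp V) :
    derivAct A (transport g ν) = transport g (derivAct (g.symm ∘L A ∘L g) ν) := by
  ext x y
  simp

theorem derivAct_transport_of_commute {D : V →L[ℝ] V} {g : V ≃L[ℝ] V}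
    (h : Commute (g : V →L[ℝ] V) D) (ν : BilinOp V) :
    derivAct D (transport g ν) = transport g (derivAct D ν) := by
  rw [derivAct_transport]
  have conj_eq : g.symm ∘L D ∘L g = D := by
    ext x
    exact g.symm_apply_eq.mpr congr($h x).symm
  rw [conj_eq]

/-- The Jacobiator of `ν`, as the map sending `x` to the failure of `ν x` to be a derivation of
`ν`. -/
noncomputable def jacobiator (ν : BilinOp V) : V →L[ℝ] BilinOp V :=
  orbitDeriv ν ∘L ν

theorem jacobiator_apply (ν : BilinOp V) (x : V) : jacobiator ν x = derivAct (ν x) ν :=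
  rfl

theorem jacobiator_transport_apply (g : V ≃L[ℝ] V) (ν : BilinOp V) (x : V) :
    jacobiator (transport g ν) x = transport g (jacobiator ν (g.symm x)) := by
  rw [jacobiator_apply, derivAct_transport]
  have conj_eq : g.symm ∘L transport g ν x ∘L g = ν (g.symm x) := by
    ext y
    simp
  rw [conj_eq, jacobiator_apply]

/-- The linearisation of the Jacobi identity at `ν`; its alternating zeros are the 2-cocycles of a
Lie bracket `ν` with adjoint coefficients. -/
noncomputable def jacobiatorDeriv (ν : BilinOp V) : BilinOp V →L[ℝ] V →L[ℝ] BilinOp V :=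
  .compL ℝ V (V →L[ℝ] V) (BilinOp V) (orbitDeriv ν) +
    (ContinuousLinearMap.compL ℝ V (V →L[ℝ] V) (BilinOp V)).flip ν ∘L orbitDeriv

theorem hasFDerivAt_jacobiator (ν : BilinOp V) : HasFDerivAt jacobiator (jacobiatorDeriv ν) ν := by
  have product_rule := (orbitDeriv (V := V)).hasFDerivAt.clm_comp (hasFDerivAt_id ν)
  exact product_rule

/-- `ν` is a Lie bracket: it is alternating, and the Jacobi identity holds in Leibniz form. -/
structure IsLie (ν : BilinOp V) : Prop where
  self_eq_zero : ∀ x, ν x x = 0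
  jacobiator_eq_zero : jacobiator ν = 0

theorem IsLie.isLie_transport {ν : BilinOp V} (hν : IsLie ν) (g : V ≃L[ℝ] V) :
    IsLie (transport g ν) where
  self_eq_zero x := by simp [hν.self_eq_zero]
  jacobiator_eq_zero := by
    ext1 x
    simp [jacobiator_transport_apply, hν.jacobiator_eq_zero]

theorem isLie_transport_iff {g : V ≃L[ℝ] V} {ν : BilinOp V} :
    IsLie (transport g ν) ↔ IsLie ν :=
  ⟨fun h => by
    simpa only [← transport_mul, inv_mul_cancel, transport_one] using h.isLie_transport g⁻¹,
    fun h => h.isLie_transport g⟩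

end Action

section Exp

variable {V : Type*} [NormedAddCommGroup V] [NormedSpace ℝ V] [CompleteSpace V]

/-- The exponential of an operator, as an element of `GL V`. -/
noncomputable def expEquiv (A : V →L[ℝ] V) : V ≃L[ℝ] V :=
  have exp_mul_exp_neg (B : V →L[ℝ] V) : NormedSpace.exp B * NormedSpace.exp (-B) = 1 := by
    let _ := NormedAlgebra.restrictScalars ℚ ℝ (V →L[ℝ] V)
    rw [← NormedSpace.exp_add_of_commute (Commute.refl B).neg_right, add_neg_cancel,
      NormedSpace.exp_zero]
  .equivOfInverse (NormedSpace.exp A) (NormedSpace.exp (-A))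
    (fun x => by simpa using congr($(exp_mul_exp_neg (-A)) x))
    (fun x => congr($(exp_mul_exp_neg A) x))

theorem coe_expEquiv (A : V →L[ℝ] V) : (expEquiv A : V →L[ℝ] V) = NormedSpace.exp A :=
  rfl

theorem commute_expEquiv {A D : V →L[ℝ] V} (h : Commute A D) :
    Commute (expEquiv A : V →L[ℝ] V) D :=
  h.exp_left

theorem expEquiv_zero : expEquiv (0 : V →L[ℝ] V) = 1 := by
  ext x
  change NormedSpace.exp (0 : V →L[ℝ] V) x = x
  rw [NormedSpace.exp_zero, one_apply_eq_self]

theorem hasStrictFDerivAt_transport_expEquiv (ν : BilinOp V) :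
    HasStrictFDerivAt (fun p : (V →L[ℝ] V) × BilinOp V => transport (expEquiv p.1) p.2)
      ((orbitDeriv ν).coprod (.id ℝ _)) (0, ν) := by
  have exp_fst : HasStrictFDerivAt (fun p : (V →L[ℝ] V) × BilinOp V => NormedSpace.exp p.1)
      (.fst ℝ _ _) (0, ν) :=
    HasStrictFDerivAt.comp (f := Prod.fst) ((0 : V →L[ℝ] V), ν)
      (hasStrictFDerivAt_exp_zero (𝕂 := ℝ)) hasStrictFDerivAt_fst
  have exp_neg_fst : HasStrictFDerivAt
      (fun p : (V →L[ℝ] V) × BilinOp V => NormedSpace.exp (-p.1)) (-.fst ℝ _ _) (0, ν) := by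
    refine HasStrictFDerivAt.comp (g := NormedSpace.exp) (g' := 1) ((0 : V →L[ℝ] V), ν) ?_
      hasStrictFDerivAt_fst.neg
    simpa using hasStrictFDerivAt_exp_zero (𝕂 := ℝ) (𝔸 := V →L[ℝ] V)
  have post_exp := (ContinuousLinearMap.compL ℝ V V V).hasStrictFDerivAt.comp _ exp_fst
  have pre_exp := (ContinuousLinearMap.compL ℝ V V V).flip.hasStrictFDerivAt.comp _ exp_neg_fst
  refine (post_exp.clm_comp (pre_exp.clm_comp (hasStrictFDerivAt_snd.clm_comp exp_neg_fst)))
    |>.congr_fderiv ?_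
  refine ContinuousLinearMap.ext fun p => ?_
  ext x y
  simp only [NormedSpace.exp_zero, neg_zero, ContinuousLinearMap.comp_neg,
    ContinuousLinearMap.comp_add, add_apply, neg_apply, ContinuousLinearMap.comp_apply,
    ContinuousLinearMap.coe_fst', ContinuousLinearMap.compL_apply, ContinuousLinearMap.coe_snd',
    ContinuousLinearMap.flip_apply, one_apply_eq_self, ContinuousLinearMap.coprod_apply,
    orbitDeriv_apply, ContinuousLinearMap.id_apply, derivAct_apply]
  abel

end Exp

end BilinOp

namespace BilinOp

section LieBridge

variable {V : Type*} [NormedAddCommGroup V] [NormedSpace ℝ V] {ν : BilinOp V}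

theorem IsLie.leibniz (hν : IsLie ν) (x y z : V) : ν x (ν y z) = ν (ν x y) z + ν y (ν x z) :=
  derivAct_eq_zero_iff.mp (DFunLike.congr_fun hν.jacobiator_eq_zero x) y z

theorem IsLie.skew (hν : IsLie ν) (x y : V) : ν x y = -ν y x := by
  have := hν.self_eq_zero (x + y)
  simp only [map_add, add_apply, hν.self_eq_zero, zero_add, add_zero] at this
  exact (neg_eq_of_add_eq_zero_right this).symm

/-- The Lie ring structure on `V` whose bracket is `ν`. -/
noncomputable abbrev IsLie.lieRing (hν : IsLie ν) : LieRing V where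
  bracket x y := ν x y
  add_lie x y z := by simp only [map_add, add_apply]
  lie_add x y z := map_add _ _ _
  lie_self := hν.self_eq_zero
  leibniz_lie := hν.leibniz

/-- The real Lie algebra structure on `V` whose bracket is `ν`. -/
noncomputable abbrev IsLie.lieAlgebra (hν : IsLie ν) : letI := hν.lieRing; LieAlgebra ℝ V :=
  letI := hν.lieRing
  { (inferInstance : Module ℝ V) with
    lie_smul := fun r x y => (ν x).map_smul r y }

open LieModule.Cohomology in
theorem IsLie.mem_twoCocycle (hν : IsLie ν) {c : BilinOp V} (hc : ∀ x, c x x = 0)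
    (cocycle : jacobiatorDeriv ν c = 0) :
    letI := hν.lieRing; letI := hν.lieAlgebra
    (⟨c.toLinearMap₁₂, hc⟩ : twoCochain ℝ V V) ∈ twoCocycle ℝ V V := by
  let := hν.lieRing
  let := hν.lieAlgebra
  let f : twoCochain ℝ V V := ⟨c.toLinearMap₁₂, hc⟩
  have c_skew (x y : V) : c x y = -c y x := (twoCochain_skew f y x).symm
  refine (mem_twoCocycle_iff _ _ _ _).mpr <| LinearMap.ext fun x => LinearMap.ext₂ fun y z => ?_
  have cocycle_apply := congr($cocycle x y z)
  change c x (ν y z) - ν (c x y) z - ν y (c x z) +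
    (ν x (c y z) - c (ν x y) z - c y (ν x z)) = 0 at cocycle_apply
  change ν x (c y z) - ν y (c x z) + ν z (c x y) - c (ν x y) z + c (ν x z) y - c (ν y z) x = 0
  rw [← cocycle_apply, hν.skew z, c_skew (ν x z), c_skew (ν y z)]
  abel

section Trace

variable [FiniteDimensional ℝ V]

variable (V) in
/-- The trace of continuous operators on a finite-dimensional space. -/
noncomputable def opTrace : (V →L[ℝ] V) →L[ℝ] ℝ :=
  LinearMap.toContinuousLinearMap (LinearMap.trace ℝ V ∘ₗ ContinuousLinearMap.coeLM ℝ)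

theorem opTrace_apply (A : V →L[ℝ] V) : opTrace V A = LinearMap.trace ℝ V A :=
  rfl

theorem opTrace_mul_comm (A B : V →L[ℝ] V) : opTrace V (A * B) = opTrace V (B * A) :=
  LinearMap.trace_mul_comm ℝ (A : V →ₗ[ℝ] V) B

/-- The Killing form `(x, y) ↦ tr (ν x ∘ ν y)`. -/
noncomputable def killing (ν : BilinOp V) : LinearMap.BilinForm ℝ V :=
  ((ContinuousLinearMap.compL ℝ V V V).bilinearComp ν ν).toLinearMap₁₂.compr₂ (opTrace V)

theorem killing_apply (ν : BilinOp V) (x y : V) : killing ν x y = opTrace V (ν x * ν y) :=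
  rfl

theorem IsLie.killingForm_eq (hν : IsLie ν) :
    letI := hν.lieRing; letI := hν.lieAlgebra; killingForm ℝ V = killing ν := by
  let := hν.lieRing
  let := hν.lieAlgebra
  ext x y
  rfl

theorem IsLie.isKilling (hν : IsLie ν) (h : (killing ν).Nondegenerate) :
    letI := hν.lieRing; letI := hν.lieAlgebra; LieAlgebra.IsKilling ℝ V := by
  let := hν.lieRing
  let := hν.lieAlgebra
  refine ⟨(LieSubmodule.eq_bot_iff _).mpr fun x hx => h.2 x fun y => ?_⟩
  rw [← hν.killingForm_eq]
  exact (LieIdeal.mem_killingCompl ℝ V ⊤).mp hx y trivial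

theorem IsLie.exists_eq_of_derivAct_eq_zero (hν : IsLie ν) (h : (killing ν).Nondegenerate)
    {D : V →L[ℝ] V} (hD : derivAct D ν = 0) : ∃ z, ν z = D := by
  let := hν.lieRing
  let := hν.lieAlgebra
  have := hν.isKilling h
  let δ : LieDerivation ℝ V V := .mk D fun x y => by
    change D (ν x y) = ν x (D y) - ν y (D x)
    rw [derivAct_eq_zero_iff.mp hD, hν.skew y, sub_neg_eq_add, add_comm]
  obtain ⟨z, hz⟩ := LieDerivation.IsKilling.exists_eq_ad δ
  refine ⟨z, ContinuousLinearMap.ext fun x => ?_⟩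
  exact (LieDerivation.ad_apply_apply ℝ V z x).symm.trans congr($hz x)

open LieModule.Cohomology in
theorem IsLie.exists_commute_derivAct_eq (hν : IsLie ν) (h : (killing ν).Nondegenerate)
    {D : V →L[ℝ] V} (hD : derivAct D ν = 0) {c : BilinOp V} (hc : ∀ x, c x x = 0)
    (hDc : derivAct D c = 0) (cocycle : jacobiatorDeriv ν c = 0) :
    ∃ A, Commute D A ∧ derivAct A ν = c := by
  let := hν.lieRing
  let := hν.lieAlgebra
  have := hν.isKilling h
  obtain ⟨z, rfl⟩ := hν.exists_eq_of_derivAct_eq_zero h hD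
  let f : twoCochain ℝ V V := ⟨c.toLinearMap₁₂, hc⟩
  have hf : f ∈ twoCocycle ℝ V V := hν.mem_twoCocycle hc cocycle
  have z_invariant : ⁅z, f.1⁆ = 0 := by
    ext x y
    have hDc_apply := congr($hDc x y)
    change ν z (c x y) - c (ν z x) y - c x (ν z y) = 0 at hDc_apply
    change ν z (c x y) - c x (ν z y) - c (ν z x) y = 0
    rw [← hDc_apply]
    abel
  have z_commutes : ⁅z, casimirHomotopy f.1⁆ = 0 := by
    rw [lie_casimirHomotopy, z_invariant]
    ext
    simp [casimirHomotopy_apply]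
  refine ⟨-LinearMap.toContinuousLinearMap (casimirHomotopy f.1), .neg_right ?_, ?_⟩
  · ext x
    exact sub_eq_zero.mp congr($z_commutes x)
  · ext x y
    have hd := congr($(d₁₂_casimirHomotopy_of_mem_twoCocycle f hf) x y)
    change ν x (casimirHomotopy f.1 y) - ν y (casimirHomotopy f.1 x) -
      casimirHomotopy f.1 (ν x y) = c x y at hd
    rw [derivAct_apply, ← hd, hν.skew y]
    simp only [neg_apply, map_neg, LinearMap.coe_toContinuousLinearMap']
    abel

end Trace

end LieBridge

section Rigidity

open Filter Topology

variable {V : Type*} [NormedAddCommGroup V] [NormedSpace ℝ V]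

/-- The equations cutting out, among all bilinear operations, the Lie brackets of which `D` is a
derivation. -/
noncomputable def lieDefect (D : V →L[ℝ] V) (ν : BilinOp V) :
    BilinOp V × BilinOp V × (V →L[ℝ] BilinOp V) :=
  (ν + ν.flip, derivAct D ν, jacobiator ν)

/-- The derivative of `lieDefect D` at `ν`. -/
noncomputable def lieDefectDeriv (D : V →L[ℝ] V) (ν : BilinOp V) :
    BilinOp V →L[ℝ] BilinOp V × BilinOp V × (V →L[ℝ] BilinOp V) :=
  (.id ℝ _ + (ContinuousLinearMap.flipₗᵢ ℝ V V V : BilinOp V →L[ℝ] BilinOp V)).prod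
    ((derivAct D).prod (jacobiatorDeriv ν))

theorem add_flip_eq_zero_iff {ν : BilinOp V} : ν + ν.flip = 0 ↔ ∀ x, ν x x = 0 := by
  constructor
  · intro h x
    have two_smul_eq : (2 : ℝ) • ν x x = 0 := by
      rw [two_smul]
      exact congr($h x x)
    exact (smul_eq_zero_iff_right two_ne_zero).mp two_smul_eq
  · intro h
    ext x y
    simpa [h] using h (x + y)

theorem lieDefect_eq_zero_iff {D : V →L[ℝ] V} {ν : BilinOp V} :
    lieDefect D ν = 0 ↔ IsLie ν ∧ derivAct D ν = 0 := by
  rw [lieDefect, Prod.mk_eq_zero, Prod.mk_eq_zero, add_flip_eq_zero_iff]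
  exact ⟨fun h => ⟨⟨h.1, h.2.2⟩, h.2.1⟩, fun h => ⟨h.1.1, h.2, h.1.2⟩⟩

theorem hasFDerivAt_lieDefect (D : V →L[ℝ] V) (ν : BilinOp V) :
    HasFDerivAt (lieDefect D) (lieDefectDeriv D ν) ν :=
  (ContinuousLinearMap.hasFDerivAt (.id ℝ _ +
    (ContinuousLinearMap.flipₗᵢ ℝ V V V : BilinOp V →L[ℝ] BilinOp V))).prodMk
    ((derivAct D).hasFDerivAt.prodMk (hasFDerivAt_jacobiator ν))

variable [FiniteDimensional ℝ V]

theorem IsLie.eventually_exists_transport_eq {ν : BilinOp V} (hν : IsLie ν)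
    (h : (killing ν).Nondegenerate) {D : V →L[ℝ] V} (hD : derivAct D ν = 0) :
    ∀ᶠ μ in 𝓝 ν, IsLie μ → derivAct D μ = 0 →
      ∃ g : V ≃L[ℝ] V, Commute (g : V →L[ℝ] V) D ∧ transport g ν = μ := by
  have := FiniteDimensional.complete ℝ V
  let P := (Subalgebra.centralizer ℝ {D}).toSubmodule
  have commute_exp (A : P) : Commute (expEquiv (A : V →L[ℝ] V) : V →L[ℝ] V) D :=
    commute_expEquiv (A.2 D rfl).symm
  have hΦ : HasStrictFDerivAt (fun p : P × BilinOp V => transport (expEquiv p.1) p.2)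
      ((orbitDeriv ν ∘L P.subtypeL).coprod (.id ℝ _)) (0, ν) :=
    HasStrictFDerivAt.comp (0, ν) (hasStrictFDerivAt_transport_expEquiv ν)
      (P.subtypeL.prodMap (.id ℝ (BilinOp V))).hasStrictFDerivAt
  have lieDefect_of_orbit (A : P) (μ : BilinOp V)
      (hμ : lieDefect D (transport (expEquiv A) μ) = 0) : lieDefect D μ = 0 := by
    rw [lieDefect_eq_zero_iff, isLie_transport_iff, derivAct_transport_of_commute (commute_exp A),
      EmbeddingLike.map_eq_zero_iff] at hμ
    exact lieDefect_eq_zero_iff.mpr hμ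
  have exact : (lieDefectDeriv D ν).ker ≤ (orbitDeriv ν ∘L P.subtypeL).range := by
    intro c (hc : (c + c.flip, derivAct D c, jacobiatorDeriv ν c) = 0)
    rw [Prod.mk_eq_zero, Prod.mk_eq_zero, add_flip_eq_zero_iff] at hc
    obtain ⟨A, hA, rfl⟩ := hν.exists_commute_derivAct_eq h hD hc.1 hc.2.1 hc.2.2
    exact ⟨⟨A, by rintro _ rfl; exact hA⟩, rfl⟩
  have open_orbit := eventually_exists_apply_eq_of_ker_le_range hΦ
    (by simp [expEquiv_zero, transport_one]) (hasFDerivAt_lieDefect D ν) lieDefect_of_orbit exact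
  filter_upwards [open_orbit] with μ hμ hLie hDμ
  obtain ⟨A, hA⟩ := hμ (lieDefect_eq_zero_iff.mpr ⟨hLie, hDμ⟩)
  exact ⟨expEquiv A, commute_exp A, hA⟩

end Rigidity

end BilinOp

namespace BilinOp

variable {V : Type*} [NormedAddCommGroup V] [InnerProductSpace ℝ V] [FiniteDimensional ℝ V]

section TraceForm

theorem opTrace_star (A : V →L[ℝ] V) : opTrace V (star A) = opTrace V A := by
  simp only [opTrace_apply, LinearMap.trace_eq_sum_inner _ (stdOrthonormalBasis ℝ V),
    ContinuousLinearMap.coe_coe, ContinuousLinearMap.star_eq_adjoint,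
    ContinuousLinearMap.adjoint_inner_right, real_inner_comm]

theorem opTrace_star_mul_self_pos {A : V →L[ℝ] V} (hA : A ≠ 0) : 0 < opTrace V (star A * A) := by
  let b := stdOrthonormalBasis ℝ V
  have trace_eq : opTrace V (star A * A) = ∑ i, ‖A (b i)‖ ^ 2 := by
    simp [opTrace_apply, LinearMap.trace_eq_sum_inner _ b, ContinuousLinearMap.star_eq_adjoint,
      ContinuousLinearMap.adjoint_inner_right]
  obtain ⟨i, hi⟩ : ∃ i, A (b i) ≠ 0 := by
    contrapose! hA
    exact ContinuousLinearMap.coe_injective (b.toBasis.ext fun i => by simpa using hA i)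
  rw [trace_eq]
  exact Finset.sum_pos' (fun i _ => by positivity) ⟨i, Finset.mem_univ i, by positivity⟩

theorem eq_of_forall_opTrace_mul_eq {M N : V →L[ℝ] V}
    (h : ∀ A, opTrace V (M * A) = opTrace V (N * A)) : M = N := by
  by_contra hMN
  refine (opTrace_star_mul_self_pos (sub_ne_zero.mpr hMN)).ne' ?_
  rw [opTrace_mul_comm, sub_mul, map_sub, h, sub_self]

variable (V) in
/-- The trace form `(A, B) ↦ tr (A B)` on operators. -/
noncomputable def traceForm : LinearMap.BilinForm ℝ (V →L[ℝ] V) :=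
  (LinearMap.mul ℝ (V →L[ℝ] V)).compr₂ (opTrace V)

theorem traceForm_nondegenerate : (traceForm V).Nondegenerate := by
  refine ⟨fun A hA => ?_, fun A hA => ?_⟩ <;> by_contra h
  · exact (opTrace_star_mul_self_pos h).ne' ((opTrace_mul_comm _ _).trans (hA (star A)))
  · exact (opTrace_star_mul_self_pos h).ne' (hA (star A))

end TraceForm

section HilbertSchmidt

/-- The values of `ν` on pairs from an orthonormal basis; the norm of this vector is the
Hilbert–Schmidt norm of `ν`. -/
noncomputable def hsCoords : BilinOp V →ₗ[ℝ]
    PiLp 2 (fun _ : Fin (Module.finrank ℝ V) × Fin (Module.finrank ℝ V) => V) where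
  toFun ν := WithLp.toLp 2 fun p => ν (stdOrthonormalBasis ℝ V p.1) (stdOrthonormalBasis ℝ V p.2)
  map_add' _ _ := rfl
  map_smul' _ _ := rfl

theorem hsCoords_injective : Function.Injective (hsCoords (V := V)) := by
  intro ν μ h
  have basis_eq (i j) : ν (stdOrthonormalBasis ℝ V i) (stdOrthonormalBasis ℝ V j) =
      μ (stdOrthonormalBasis ℝ V i) (stdOrthonormalBasis ℝ V j) :=
    congr(WithLp.ofLp $h (i, j))
  let b := (stdOrthonormalBasis ℝ V).toBasis
  have : ν.toLinearMap₁₂ = μ.toLinearMap₁₂ := b.ext fun i => b.ext fun j => by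
    simpa [b] using basis_eq i j
  ext x y
  exact congr($this x y)

variable (V) in
/-- The Hilbert–Schmidt inner product of bilinear operations. -/
noncomputable def hsForm : LinearMap.BilinForm ℝ (BilinOp V) :=
  (innerₗ _).compl₁₂ hsCoords hsCoords

theorem hsForm_apply (ν μ : BilinOp V) : hsForm V ν μ = inner ℝ (hsCoords ν) (hsCoords μ) :=
  rfl

theorem hsForm_comm (ν μ : BilinOp V) : hsForm V ν μ = hsForm V μ ν :=
  real_inner_comm (hsCoords μ) (hsCoords ν)

theorem hsForm_self_eq_zero {ν : BilinOp V} : hsForm V ν ν = 0 ↔ ν = 0 := by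
  rw [hsForm_apply, inner_self_eq_zero, map_eq_zero_iff _ hsCoords_injective]

theorem hsForm_eq_sum (ν μ : BilinOp V) : hsForm V ν μ = ∑ i, ∑ j,
    inner ℝ (ν (stdOrthonormalBasis ℝ V i) (stdOrthonormalBasis ℝ V j))
      (μ (stdOrthonormalBasis ℝ V i) (stdOrthonormalBasis ℝ V j)) := by
  rw [hsForm_apply, PiLp.inner_apply, Fintype.sum_prod_type]
  rfl

theorem sum_orthonormalBasis_apply_star (A : V →L[ℝ] V) (β : V →ₗ[ℝ] V →ₗ[ℝ] ℝ) {ι : Type*}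
    [Fintype ι] (b : OrthonormalBasis ι ℝ V) :
    ∑ i, β (A (b i)) (b i) = ∑ i, β (b i) (star A (b i)) :=
  sum_apply_left_eq_sum_apply_right_of_adjoint (B := innerₗ V)
    (fun x => by simpa [real_inner_comm] using b.sum_repr' x) b.sum_repr'
    (fun x y => (ContinuousLinearMap.adjoint_inner_right A x y).symm) β

theorem hsForm_derivAct (A : V →L[ℝ] V) (ν μ : BilinOp V) :
    hsForm V (derivAct A ν) μ = hsForm V ν (derivAct (star A) μ) := by
  let b := stdOrthonormalBasis ℝ V
  have first_slot : ∑ i, ∑ j, inner ℝ (ν (A (b i)) (b j)) (μ (b i) (b j)) =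
      ∑ i, ∑ j, inner ℝ (ν (b i) (b j)) (μ (star A (b i)) (b j)) := by
    refine Finset.sum_comm.trans (.trans ?_ Finset.sum_comm)
    exact Finset.sum_congr rfl fun j _ => sum_orthonormalBasis_apply_star A
      ((innerₗ V).compl₁₂ (ν.flip (b j) : V →ₗ[ℝ] V) (μ.flip (b j))) b
  have second_slot (i) : ∑ j, inner ℝ (ν (b i) (A (b j))) (μ (b i) (b j)) =
      ∑ j, inner ℝ (ν (b i) (b j)) (μ (b i) (star A (b j))) :=
    sum_orthonormalBasis_apply_star A ((innerₗ V).compl₁₂ (ν (b i) : V →ₗ[ℝ] V) (μ (b i))) b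
  have value (u v : V) : inner ℝ (A u) v = inner ℝ u (star A v) :=
    (ContinuousLinearMap.adjoint_inner_right A u v).symm
  simp only [hsForm_eq_sum, derivAct_apply, inner_sub_left, inner_sub_right,
    Finset.sum_sub_distrib, value, first_slot, second_slot, b]

theorem hsForm_derivAct_star_self {P : V →L[ℝ] V} {ν : BilinOp V} (hP : derivAct P ν = 0) :
    hsForm V (derivAct (star P) ν) (derivAct (star P) ν) = hsForm V (derivAct ⁅P, star P⁆ ν) ν := by
  rw [← hsForm_derivAct, derivAct_lie, hP, map_zero, sub_zero]

end HilbertSchmidt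

section MomentMap

variable {ν : BilinOp V}

/-- The moment map of the action of `GL V` on bilinear operations: the operator representing, via
the trace form, the functional `A ↦ ⟨A · ν, ν⟩`. -/
noncomputable def moment (ν : BilinOp V) : V →L[ℝ] V :=
  ((traceForm V).toDual traceForm_nondegenerate).symm
    ((hsForm V).flip ν ∘ₗ (orbitDeriv ν : (V →L[ℝ] V) →ₗ[ℝ] BilinOp V))

theorem opTrace_moment_mul (ν : BilinOp V) (A : V →L[ℝ] V) :
    opTrace V (moment ν * A) = hsForm V (derivAct A ν) ν :=
  LinearMap.BilinForm.apply_toDual_symm_apply (hB := traceForm_nondegenerate) _ A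

theorem isSelfAdjoint_moment (ν : BilinOp V) : IsSelfAdjoint (moment ν) := by
  refine eq_of_forall_opTrace_mul_eq fun A => ?_
  rw [← opTrace_star, star_mul, star_star, opTrace_mul_comm, opTrace_moment_mul,
    opTrace_moment_mul, hsForm_derivAct, star_star, hsForm_comm]

theorem commute_moment {D : V →L[ℝ] V} (hD : derivAct D ν = 0) (hD' : derivAct (star D) ν = 0) :
    Commute (moment ν) D := by
  refine eq_of_forall_opTrace_mul_eq fun A => sub_eq_zero.mp ?_
  calc opTrace V (moment ν * D * A) - opTrace V (D * moment ν * A)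
      = opTrace V (moment ν * ⁅D, A⁆) := by
        rw [Ring.lie_def, mul_sub, map_sub, mul_assoc, mul_assoc D, opTrace_mul_comm D, mul_assoc]
    _ = hsForm V (derivAct D (derivAct A ν)) ν := by
        rw [opTrace_moment_mul, derivAct_lie, hD, map_zero, sub_zero]
    _ = 0 := by rw [hsForm_derivAct, hD', map_zero]

/-- `ν` is a critical point of the Hilbert–Schmidt norm along the orbit of the determinant-one
centraliser of `D`: the first variation vanishes along all self-adjoint traceless directions
commuting with `D`. -/
def IsCritical (D : V →L[ℝ] V) (ν : BilinOp V) : Prop :=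
  ∀ A : V →L[ℝ] V, IsSelfAdjoint A → opTrace V A = 0 → Commute A D → hsForm V (derivAct A ν) ν = 0

theorem derivAct_star_of_isStarNormal {D : V →L[ℝ] V} [IsStarNormal D] (hD : derivAct D ν = 0) :
    derivAct (star D) ν = 0 := by
  rw [← hsForm_self_eq_zero, hsForm_derivAct_star_self hD,
    Ring.lie_def, star_comm_self', sub_self, map_zero, zero_apply, map_zero, LinearMap.zero_apply]

theorem IsCritical.exists_moment_eq_smul_one {D : V →L[ℝ] V} [IsStarNormal D]
    (hD : derivAct D ν = 0) (hν : IsCritical D ν) : ∃ c : ℝ, moment ν = c • 1 := by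
  cases subsingleton_or_nontrivial V
  · exact ⟨0, Subsingleton.elim _ _⟩
  let c : ℝ := opTrace V (moment ν) / Module.finrank ℝ V
  let A := moment ν - c • 1
  have A_selfAdjoint : IsSelfAdjoint A :=
    (isSelfAdjoint_moment ν).sub (.smul (.all c) (.one _))
  have A_traceless : opTrace V A = 0 := by
    have trace_one : opTrace V 1 = Module.finrank ℝ V := LinearMap.trace_one ℝ V
    have finrank_ne_zero : (Module.finrank ℝ V : ℝ) ≠ 0 :=
      Nat.cast_ne_zero.mpr Module.finrank_pos.ne'
    rw [map_sub, map_smul, trace_one, smul_eq_mul, div_mul_cancel₀ _ finrank_ne_zero, sub_self]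
  have A_commutes : Commute A D :=
    (commute_moment hD (derivAct_star_of_isStarNormal hD)).sub_left
      ((Commute.one_left D).smul_left c)
  have trace_sq : opTrace V (star A * A) = 0 := by
    have moment_eq : moment ν = A + c • 1 := (sub_add_cancel _ _).symm
    have critical := hν A A_selfAdjoint A_traceless A_commutes
    rwa [← opTrace_moment_mul, moment_eq, add_mul, map_add, smul_one_mul, map_smul, A_traceless,
      smul_zero, add_zero, ← congr($A_selfAdjoint.star_eq * A)] at critical
  exact ⟨c, sub_eq_zero.mp <| not_imp_comm.mp opTrace_star_mul_self_pos trace_sq.not_gt⟩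

theorem IsCritical.derivAct_star_eq_zero {D P : V →L[ℝ] V} [IsStarNormal D]
    (hν : IsCritical D ν) (hD : derivAct D ν = 0) (hP : derivAct P ν = 0) :
    derivAct (star P) ν = 0 := by
  obtain ⟨c, hc⟩ := hν.exists_moment_eq_smul_one hD
  rw [← hsForm_self_eq_zero, hsForm_derivAct_star_self hP, ← opTrace_moment_mul, hc, smul_one_mul,
    map_smul, Ring.lie_def, map_sub, opTrace_mul_comm, sub_self, smul_zero]

end MomentMap

end BilinOp

section ExpDet

variable {V : Type*} [NormedAddCommGroup V]

theorem exp_apply_of_apply_eq_smul [NormedSpace ℝ V] [CompleteSpace V] {A : V →L[ℝ] V} {c : ℝ}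
    {v : V} (h : A v = c • v) : NormedSpace.exp A v = Real.exp c • v := by
  have pow_apply (n : ℕ) : (A ^ n) v = c ^ n • v := by
    induction n with
    | zero => simp
    | succ n ih => rw [pow_succ', mul_apply_eq_comp, ih, map_smul, h, smul_smul, pow_succ]
  have exp_A_series := (ContinuousLinearMap.apply ℝ V v).hasSum
    (NormedSpace.exp_series_hasSum_exp' (𝕂 := ℝ) A)
  have exp_c_series := (NormedSpace.exp_series_hasSum_exp' (𝕂 := ℝ) c).smul_const v
  rw [Real.exp_eq_exp_ℝ]
  refine exp_A_series.unique (exp_c_series.congr_fun fun n => ?_)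
  simp [pow_apply, smul_smul]

theorem det_exp_of_isSelfAdjoint [InnerProductSpace ℝ V] [FiniteDimensional ℝ V] {A : V →L[ℝ] V}
    (hA : IsSelfAdjoint A) : (NormedSpace.exp A).det = Real.exp (LinearMap.trace ℝ V A) := by
  have symmetric : (A : V →ₗ[ℝ] V).IsSymmetric := hA.isSymmetric
  let b := symmetric.eigenvectorBasis rfl
  let eigenvalue := symmetric.eigenvalues rfl
  have apply_b (i) : A (b i) = eigenvalue i • b i := symmetric.apply_eigenvectorBasis rfl i
  have trace_eq : LinearMap.trace ℝ V A = ∑ i, eigenvalue i := by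
    simp [LinearMap.trace_eq_sum_inner _ b, apply_b, inner_smul_right]
  have toMatrix_exp : LinearMap.toMatrix b.toBasis b.toBasis (NormedSpace.exp A : V →L[ℝ] V) =
      Matrix.diagonal fun i => Real.exp (eigenvalue i) := by
    ext i j
    rw [LinearMap.toMatrix_apply, Matrix.diagonal_apply]
    by_cases h : i = j <;> simp [exp_apply_of_apply_eq_smul (apply_b j), h]
  rw [ContinuousLinearMap.det, ← LinearMap.det_toMatrix b.toBasis, toMatrix_exp,
    Matrix.det_diagonal, ← Real.exp_sum, trace_eq]

end ExpDet

section NormMinimum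

variable {E F : Type*} [NormedAddCommGroup E] [NormedSpace ℝ E]

theorem exists_norm_apply_le_of_isClosed [FiniteDimensional ℝ E] [NormedAddCommGroup F]
    [NormedSpace ℝ F] [FiniteDimensional ℝ F] {T : E →ₗ[ℝ] F} (hT : Function.Injective T)
    {S : Set E} (hS : IsClosed S) (hne : S.Nonempty) : ∃ x ∈ S, ∀ y ∈ S, ‖T x‖ ≤ ‖T y‖ := by
  have closed_image := (LinearMap.isClosedEmbedding_of_injective
    (LinearMap.ker_eq_bot.mpr hT)).isClosedMap S hS
  obtain ⟨_, ⟨x, hx, rfl⟩, dist_eq⟩ := closed_image.exists_infDist_eq_dist (hne.image _) 0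
  refine ⟨x, hx, fun y hy => ?_⟩
  have := Metric.infDist_le_dist_of_mem (x := 0) (Set.mem_image_of_mem T hy)
  rwa [dist_eq, dist_zero_left, dist_zero_left] at this

theorem inner_apply_deriv_eq_zero_of_norm_le [NormedAddCommGroup F] [InnerProductSpace ℝ F]
    {T : E →L[ℝ] F} {f : ℝ → E} {v : E} {t : ℝ} (hf : HasDerivAt f v t)
    (hmin : ∀ s, ‖T (f t)‖ ≤ ‖T (f s)‖) : inner ℝ (T (f t)) (T v) = 0 := by
  have norm_sq_min : IsLocalMin (fun s => ‖T (f s)‖ ^ 2) t :=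
    .of_forall fun s => pow_le_pow_left₀ (norm_nonneg _) (hmin s) 2
  have := norm_sq_min.hasDerivAt_eq_zero (T.hasFDerivAt.comp_hasDerivAt t hf).norm_sq
  exact (mul_eq_zero_iff_left two_ne_zero).mp this

end NormMinimum

namespace BilinOp

section Discriminant

variable {V : Type*} [NormedAddCommGroup V] [NormedSpace ℝ V] [FiniteDimensional ℝ V]

theorem killing_transport (g : V ≃L[ℝ] V) (ν : BilinOp V) :
    killing (transport g ν) = (killing ν).comp (g.symm : V →L[ℝ] V) (g.symm : V →L[ℝ] V) := by
  ext x y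
  have conj_eq : ((transport g ν x * transport g ν y : V →L[ℝ] V) : V →ₗ[ℝ] V) =
      g.toLinearEquiv.conj (ν (g.symm x) * ν (g.symm y) : V →L[ℝ] V) := by
    ext v
    simp [LinearEquiv.conj_apply]
  rw [killing_apply, opTrace_apply, conj_eq, LinearMap.trace_conj']
  rfl

/-- The discriminant of the Killing form of `ν` in a fixed basis. -/
noncomputable def discriminant (ν : BilinOp V) : ℝ :=
  (LinearMap.BilinForm.toMatrix (Module.finBasis ℝ V) (killing ν)).det

theorem nondegenerate_killing_iff {ν : BilinOp V} :
    (killing ν).Nondegenerate ↔ discriminant ν ≠ 0 :=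
  LinearMap.BilinForm.nondegenerate_iff_det_ne_zero _

theorem discriminant_transport {g : V ≃L[ℝ] V} (hg : (g : V →L[ℝ] V).det = 1) (ν : BilinOp V) :
    discriminant (transport g ν) = discriminant ν := by
  let b := Module.finBasis ℝ V
  have det_symm : LinearMap.det ((g.symm : V →L[ℝ] V) : V →ₗ[ℝ] V) = 1 := by
    have hg' : LinearMap.det (g.toLinearEquiv : V →ₗ[ℝ] V) = 1 := hg
    have symm_mul := g.toLinearEquiv.det_symm_mul_det
    rwa [hg', mul_one] at symm_mul
  rw [discriminant, killing_transport, LinearMap.BilinForm.toMatrix_comp b b, Matrix.det_mul,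
    Matrix.det_mul, Matrix.det_transpose, LinearMap.det_toMatrix, det_symm, one_mul, mul_one,
    discriminant]

theorem continuous_discriminant : Continuous (discriminant (V := V)) := by
  refine Continuous.matrix_det (continuous_matrix fun i j => ?_)
  simp only [LinearMap.BilinForm.toMatrix_apply, killing_apply]
  fun_prop

end Discriminant

section KempfNess

open Topology

variable {V : Type*} [NormedAddCommGroup V]

section Orbit

variable [NormedSpace ℝ V]

/-- The orbit of `μ` under the operators of determinant one commuting with `D`. -/
def specialOrbit (D : V →L[ℝ] V) (μ : BilinOp V) : Set (BilinOp V) :=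
  {ν | ∃ g : V ≃L[ℝ] V, Commute (g : V →L[ℝ] V) D ∧ (g : V →L[ℝ] V).det = 1 ∧ transport g μ = ν}

variable {D : V →L[ℝ] V} {μ ν : BilinOp V}

theorem self_mem_specialOrbit (D : V →L[ℝ] V) (μ : BilinOp V) : μ ∈ specialOrbit D μ :=
  ⟨1, .one_left D, LinearMap.det_id, transport_one μ⟩

theorem commute_inv {g : V ≃L[ℝ] V} (h : Commute (g : V →L[ℝ] V) D) :
    Commute ((g⁻¹ : V ≃L[ℝ] V) : V →L[ℝ] V) D := by
  ext x
  have conj_eq : D x = g (D (g.symm x)) := by simpa using congr($h (g.symm x)).symm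
  exact g.symm_apply_eq.mpr conj_eq

theorem transport_mem_closure_specialOrbit {g : V ≃L[ℝ] V} (hg : Commute (g : V →L[ℝ] V) D)
    (det_g : (g : V →L[ℝ] V).det = 1) (hν : ν ∈ closure (specialOrbit D μ)) :
    transport g ν ∈ closure (specialOrbit D μ) := by
  have mapsTo : Set.MapsTo (transport g) (specialOrbit D μ) (specialOrbit D μ) := by
    rintro _ ⟨k, hk, det_k, rfl⟩
    refine ⟨g * k, hg.mul_left hk, ?_, transport_mul g k μ⟩
    exact (map_mul LinearMap.det _ _).trans ((congrArg₂ (· * ·) det_g det_k).trans (mul_one 1))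
  exact mapsTo.closure (transport g).continuous hν

theorem isClosed_setOf_isLie : IsClosed {ν : BilinOp V | IsLie ν} := by
  have isLie_eq : {ν : BilinOp V | IsLie ν} = {ν | ∀ x, ν x x = 0} ∩ {ν | jacobiator ν = 0} :=
    Set.ext fun ν => ⟨fun h => ⟨h.1, h.2⟩, fun h => ⟨h.1, h.2⟩⟩
  have continuous_jacobiator : Continuous (jacobiator (V := V)) :=
    continuous_iff_continuousAt.mpr fun ν => (hasFDerivAt_jacobiator ν).continuousAt
  rw [isLie_eq, Set.ofPred_forall]
  exact (isClosed_iInter fun x => isClosed_eq (by fun_prop) continuous_const).inter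
    (isClosed_eq continuous_jacobiator continuous_const)

theorem isLie_of_mem_closure_specialOrbit (hμ : IsLie μ) (hν : ν ∈ closure (specialOrbit D μ)) :
    IsLie ν := by
  refine closure_minimal ?_ isClosed_setOf_isLie hν
  rintro _ ⟨g, -, -, rfl⟩
  exact hμ.isLie_transport g

theorem derivAct_eq_zero_of_mem_closure_specialOrbit (hD : derivAct D μ = 0)
    (hν : ν ∈ closure (specialOrbit D μ)) : derivAct D ν = 0 := by
  refine closure_minimal ?_ (isClosed_eq (derivAct D).continuous continuous_const) hν
  rintro _ ⟨g, hg, -, rfl⟩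
  rw [Set.mem_ofPred_eq, derivAct_transport_of_commute hg, hD, map_zero]

variable [FiniteDimensional ℝ V]

theorem discriminant_eq_of_mem_closure_specialOrbit (hν : ν ∈ closure (specialOrbit D μ)) :
    discriminant ν = discriminant μ := by
  refine closure_minimal ?_ (isClosed_eq continuous_discriminant continuous_const) hν
  rintro _ ⟨g, -, det_g, rfl⟩
  exact discriminant_transport det_g μ

-- The limit `ν` is again semisimple, hence rigid: nearby points of the orbit are conjugate to it.
theorem exists_transport_eq_of_mem_closure_specialOrbit (hμ : IsLie μ)
    (nondegenerate : (killing μ).Nondegenerate) (hD : derivAct D μ = 0)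
    (hν : ν ∈ closure (specialOrbit D μ)) :
    ∃ g : V ≃L[ℝ] V, Commute (g : V →L[ℝ] V) D ∧ transport g μ = ν := by
  have hν_lie := isLie_of_mem_closure_specialOrbit hμ hν
  have hDν := derivAct_eq_zero_of_mem_closure_specialOrbit hD hν
  have hν_nondegenerate : (killing ν).Nondegenerate := by
    rwa [nondegenerate_killing_iff, discriminant_eq_of_mem_closure_specialOrbit hν,
      ← nondegenerate_killing_iff]
  obtain ⟨_, rigid, g, hg, -, rfl⟩ := mem_closure_iff_nhds.mp hν _
    (hν_lie.eventually_exists_transport_eq hν_nondegenerate hDν)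
  obtain ⟨k, hk, transport_k⟩ := rigid (hμ.isLie_transport g)
    (by rw [derivAct_transport_of_commute hg, hD, map_zero])
  refine ⟨k⁻¹ * g, ?_, ?_⟩
  · exact (commute_inv hk).mul_left hg
  · rw [transport_mul, ← transport_k, ← transport_mul, inv_mul_cancel, transport_one]

end Orbit

variable [InnerProductSpace ℝ V] [FiniteDimensional ℝ V] {D : V →L[ℝ] V} {μ : BilinOp V}

theorem hasDerivAt_transport_expEquiv_smul (A : V →L[ℝ] V) (ν : BilinOp V) :
    HasDerivAt (fun t : ℝ => transport (expEquiv (t • A)) ν) (derivAct A ν) 0 := by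
  have line : HasDerivAt (fun t : ℝ => (t • A, ν)) (A, (0 : BilinOp V)) 0 := by
    simpa using ((hasDerivAt_id (0 : ℝ)).smul_const A).prodMk (hasDerivAt_const 0 ν)
  have flow := HasFDerivAt.comp_hasDerivAt (0 : ℝ) (f := fun t : ℝ => (t • A, ν))
    (by simpa using (hasStrictFDerivAt_transport_expEquiv ν).hasFDerivAt) line
  simpa [Function.comp_def] using flow

theorem isCritical_of_norm_le {ν : BilinOp V} (hν : ν ∈ closure (specialOrbit D μ))
    (hmin : ∀ ν' ∈ closure (specialOrbit D μ), ‖hsCoords ν‖ ≤ ‖hsCoords ν'‖) : IsCritical D ν := by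
  intro A A_selfAdjoint A_traceless A_commutes
  have det_exp (t : ℝ) : (expEquiv (t • A) : V →L[ℝ] V).det = 1 := by
    rw [coe_expEquiv, det_exp_of_isSelfAdjoint (.smul (.all t) A_selfAdjoint), ← opTrace_apply,
      map_smul, A_traceless, smul_zero, Real.exp_zero]
  have flow_le (t : ℝ) := hmin _ <| transport_mem_closure_specialOrbit
    (commute_expEquiv (A_commutes.smul_left t)) (det_exp t) hν
  have critical := inner_apply_deriv_eq_zero_of_norm_le
    (T := LinearMap.toContinuousLinearMap hsCoords) (hasDerivAt_transport_expEquiv_smul A ν)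
    (by simpa [expEquiv_zero, transport_one] using flow_le)
  rw [hsForm_comm, hsForm_apply]
  simpa [expEquiv_zero, transport_one] using critical

theorem exists_transport_derivAct_star_eq_zero (hμ : IsLie μ)
    (nondegenerate : (killing μ).Nondegenerate) (hD : derivAct D μ = 0) [IsStarNormal D] :
    ∃ g : V ≃L[ℝ] V, Commute (g : V →L[ℝ] V) D ∧
      ∀ P, derivAct P (transport g μ) = 0 → derivAct (star P) (transport g μ) = 0 := by
  have orbit_nonempty : (specialOrbit D μ).Nonempty := ⟨μ, self_mem_specialOrbit D μ⟩
  obtain ⟨ν, hν, hmin⟩ := exists_norm_apply_le_of_isClosed (T := hsCoords (V := V))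
    hsCoords_injective isClosed_closure orbit_nonempty.closure
  obtain ⟨g, hg, rfl⟩ :=
    exists_transport_eq_of_mem_closure_specialOrbit hμ nondegenerate hD hν
  exact ⟨g, hg, fun P hP => (isCritical_of_norm_le hν hmin).derivAct_star_eq_zero
    (derivAct_eq_zero_of_mem_closure_specialOrbit hD hν) hP⟩

end KempfNess

end BilinOp

section NormalForm

open Module Polynomial TensorProduct

theorem exists_basis_apply_eq_smul_of_iSup_eigenspace_eq_top {K M : Type*} [Field K]
    [AddCommGroup M] [Module K M] [Module.Finite K M] {T : End K M}
    (h : ⨆ a, T.eigenspace a = ⊤) :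
    ∃ (b : Basis (Fin (finrank K M)) K M) (l : Fin (finrank K M) → K),
      ∀ i, T (b i) = l i • b i := by
  have span_eigenvectors : ⊤ ≤ Submodule.span K {v | ∃ a : K, T v = a • v} := by
    rw [← h]
    exact iSup_le fun a v hv => Submodule.subset_span ⟨a, End.mem_eigenspace_iff.mp hv⟩
  let b := Basis.ofSpan span_eigenvectors
  have := Module.Finite.finite_basis b
  let b' := b.reindex (Finite.equivFinOfCardEq (finrank_eq_nat_card_basis b).symm)
  have apply_b' (i) : ∃ a : K, T (b' i) = a • b' i := by
    rw [Basis.reindex_apply]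
    exact Basis.ofSpan_subset span_eigenvectors ⟨_, rfl⟩
  exact ⟨b', Classical.skolem.mp apply_b'⟩

theorem repr_apply_of_apply_eq_smul {ι K M : Type*} [CommSemiring K] [AddCommMonoid M] [Module K M]
    {T : End K M} {b : Basis ι K M} {l : ι → K} (h : ∀ i, T (b i) = l i • b i) (z : M) (i : ι) :
    b.repr (T z) i = l i * b.repr z i := by
  suffices b.coord i ∘ₗ T = l i • b.coord i from congr($this z)
  refine b.ext fun j => ?_
  by_cases hij : j = i <;> simp [h, hij]

theorem exists_injective_apply_eq_mul {L : Type*} [AddCommGroup L] [Module ℝ L] [Module.Finite ℝ L]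
    {D : End ℝ L} (hD : End.IsSemisimple (D.baseChange ℂ)) :
    ∃ (m : ℕ) (F : L →ₗ[ℝ] EuclideanSpace ℂ (Fin m)) (l : Fin m → ℂ),
      Function.Injective F ∧ ∀ x i, F (D x) i = l i * F x i := by
  obtain ⟨b, l, hb⟩ :=
    exists_basis_apply_eq_smul_of_iSup_eigenspace_eq_top hD.iSup_eigenspace_eq_top
  let coords := b.equivFun.trans (WithLp.linearEquiv 2 ℂ _).symm
  refine ⟨_, coords.toLinearMap.restrictScalars ℝ ∘ₗ TensorProduct.mk ℝ ℂ L 1, l, ?_, fun x i => ?_⟩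
  · exact coords.injective.comp (Module.Flat.tensorProduct_mk_injective ℝ L ℂ)
  · exact repr_apply_of_apply_eq_smul hb (1 ⊗ₜ x) i

theorem apply_aeval_of_apply_eq_mul {R A L : Type*} [CommSemiring R] [Semiring A] [Algebra R A]
    [AddCommMonoid L] [Module R L] {D : End R L} {c : L →ₗ[R] A} {l : A}
    (h : ∀ x, c (D x) = l * c x) (p : R[X]) (x : L) : c (aeval D p x) = aeval l p * c x := by
  have apply_pow (n : ℕ) (x : L) : c ((D ^ n) x) = l ^ n * c x := by
    induction n with
    | zero => simp
    | succ n ih => rw [pow_succ', End.mul_apply, h, ih, pow_succ', mul_assoc]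
  induction p using Polynomial.induction_on' with
  | add p q hp hq => simp [hp, hq, add_mul]
  | monomial n a => simp [aeval_monomial, apply_pow, Algebra.smul_def, mul_assoc]

-- Interpolate `conj` on `S ∪ conj S` and average the interpolant with its conjugate.
theorem exists_real_polynomial_aeval_eq_conj (S : Finset ℂ) :
    ∃ q : ℝ[X], ∀ z ∈ S, aeval z q = starRingEnd ℂ z := by
  let S' := S ∪ S.image (starRingEnd ℂ)
  let p : ℂ[X] := Lagrange.interpolate S' id (starRingEnd ℂ)
  let p_conj := p.map (starRingEnd ℂ)
  have eval_p {z : ℂ} (hz : z ∈ S') : p.eval z = starRingEnd ℂ z :=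
    Lagrange.eval_interpolate_at_node (v := id) _ (Set.injOn_id _) hz
  have eval_p_conj {z : ℂ} (hz : z ∈ S) : p_conj.eval z = starRingEnd ℂ z := by
    have conj_mem : starRingEnd ℂ z ∈ S' :=
      Finset.mem_union_right _ (Finset.mem_image_of_mem _ hz)
    have conj_eval := eval₂_hom (p := p) (starRingEnd ℂ) (starRingEnd ℂ z)
    rw [eval_p conj_mem] at conj_eval
    simpa [p_conj, eval_map] using conj_eval
  obtain ⟨q, hq⟩ : ∃ q : ℝ[X], q.map (algebraMap ℝ ℂ) = C (1 / 2 : ℂ) * (p + p_conj) := by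
    rw [← mem_lifts, lifts_iff_coeff_lifts]
    exact fun n => ⟨(p.coeff n).re, by simp [p_conj, Complex.add_conj]⟩
  refine ⟨q, fun z hz => ?_⟩
  rw [← eval_map_algebraMap, hq, eval_C_mul, eval_add, eval_p_conj hz,
    eval_p (Finset.mem_union_left _ hz)]
  ring

theorem exists_linearEquiv_isStarNormal_conj_of_injective {L E : Type*} [AddCommGroup L]
    [Module ℝ L] [NormedAddCommGroup E] [InnerProductSpace ℝ E] [FiniteDimensional ℝ E]
    {F : L →ₗ[ℝ] E} (hF : Function.Injective F) {D D' : End ℝ L} (comm : Commute D D')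
    (adjoint : ∀ x y, inner ℝ (F (D x)) (F y) = inner ℝ (F x) (F (D' y))) :
    ∃ (n : ℕ) (e : L ≃ₗ[ℝ] EuclideanSpace ℝ (Fin n)),
      IsStarNormal (LinearMap.toContinuousLinearMap (e.conj D)) := by
  let isometry := (stdOrthonormalBasis ℝ F.range).repr
  let e := (LinearEquiv.ofInjective F hF).trans isometry.toLinearEquiv
  have inner_e (x y : L) : inner ℝ (e x) (e y) = inner ℝ (F x) (F y) :=
    isometry.inner_map_map _ _
  have star_eq : star (LinearMap.toContinuousLinearMap (e.conj D)) =
      LinearMap.toContinuousLinearMap (e.conj D') := by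
    refine ((ContinuousLinearMap.eq_adjoint_iff _ _).mpr fun v w => ?_).symm
    obtain ⟨x, rfl⟩ := e.surjective v
    obtain ⟨y, rfl⟩ := e.surjective w
    simpa [LinearEquiv.conj_apply, inner_e, real_inner_comm] using (adjoint y x).symm
  refine ⟨_, e, ⟨?_⟩⟩
  rw [star_eq]
  ext1 v
  simpa [LinearEquiv.conj_apply] using congr(e ($comm.symm (e.symm v)))

theorem exists_linearEquiv_isStarNormal_conj {L : Type*} [AddCommGroup L] [Module ℝ L]
    [Module.Finite ℝ L] {D : End ℝ L} (hD : End.IsSemisimple (D.baseChange ℂ)) :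
    ∃ (n : ℕ) (e : L ≃ₗ[ℝ] EuclideanSpace ℝ (Fin n)),
      IsStarNormal (LinearMap.toContinuousLinearMap (e.conj D)) := by
  obtain ⟨m, F, l, hF, F_apply⟩ := exists_injective_apply_eq_mul hD
  obtain ⟨q, hq⟩ := exists_real_polynomial_aeval_eq_conj (Finset.univ.image l)
  have F_aeval (x : L) (i : Fin m) : F (aeval D q x) i = starRingEnd ℂ (l i) * F x i := by
    rw [← hq (l i) (Finset.mem_image_of_mem l (Finset.mem_univ i))]
    exact apply_aeval_of_apply_eq_mul
      (c := PiLp.projₗ (𝕜 := ℝ) 2 (fun _ => ℂ) i ∘ₗ F) (F_apply · i) q x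
  have comm : Commute D (aeval D q) := by simpa using (Commute.all X q).map (aeval D)
  refine exists_linearEquiv_isStarNormal_conj_of_injective hF comm fun x y => ?_
  simp only [PiLp.inner_apply, F_apply, F_aeval, Complex.inner, map_mul, mul_assoc, mul_left_comm]

end NormalForm

namespace BilinOp

section OfLieAlgebra

attribute [local instance] LieRing.ofAssociativeRing

variable {L : Type*} [LieRing L] [LieAlgebra ℝ L] {V : Type*} [NormedAddCommGroup V]

section

variable [NormedSpace ℝ V] [FiniteDimensional ℝ V] (e : L ≃ₗ[ℝ] V)

/-- The adjoint representation of `L`, with `L` identified with `V` along `e`. -/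
noncomputable def adRep : L →ₗ⁅ℝ⁆ (V →L[ℝ] V) :=
  ((Module.End.toContinuousLinearMap V).toAlgHom.toLieHom).comp
    (e.lieConj.toLieHom.comp (LieAlgebra.ad ℝ L))

theorem adRep_apply (x : L) :
    adRep e x = LinearMap.toContinuousLinearMap (e.conj (LieAlgebra.ad ℝ L x)) :=
  rfl

theorem adRep_apply_apply (x y : L) : adRep e x (e y) = e ⁅x, y⁆ := by
  simp [adRep_apply, LinearEquiv.conj_apply]

theorem adRep_injective [LieAlgebra.HasTrivialRadical ℝ L] : Function.Injective (adRep e) :=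
  LinearMap.toContinuousLinearMap.injective.comp <| e.conj.injective.comp
    ((LieHom.ker_eq_bot _).mp (LieAlgebra.ad_ker_eq_bot_of_hasTrivialRadical ℝ L))

theorem opTrace_adRep_mul (x y : L) :
    opTrace V (adRep e x * adRep e y) = killingForm ℝ L x y := by
  rw [killingForm_apply_apply, ← LinearMap.trace_conj' _ e, LinearEquiv.conj_comp, opTrace_apply]
  rfl

/-- The Lie bracket of `L`, carried over to `V` along `e`. -/
noncomputable def ofLieAlgebra : BilinOp V :=
  LinearMap.toContinuousLinearMap ((adRep e : L →ₗ[ℝ] V →L[ℝ] V) ∘ₗ e.symm)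

theorem ofLieAlgebra_apply (x : L) : ofLieAlgebra e (e x) = adRep e x := by
  simp [ofLieAlgebra]

theorem isLie_ofLieAlgebra : IsLie (ofLieAlgebra e) where
  self_eq_zero := e.surjective.forall.mpr fun x => by
    rw [ofLieAlgebra_apply, adRep_apply_apply, lie_self, map_zero]
  jacobiator_eq_zero := by
    refine ContinuousLinearMap.ext <| e.surjective.forall.mpr fun x => ?_
    rw [jacobiator_apply, zero_apply, derivAct_eq_zero_iff]
    refine e.surjective.forall₂.mpr fun y z => ?_
    simp only [ofLieAlgebra_apply, adRep_apply_apply]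
    rw [leibniz_lie, map_add]

theorem nondegenerate_killing_ofLieAlgebra [LieAlgebra.IsKilling ℝ L] :
    (killing (ofLieAlgebra e)).Nondegenerate := by
  have killing_eq : killing (ofLieAlgebra e) = LinearMap.BilinForm.congr e (killingForm ℝ L) := by
    ext v w
    obtain ⟨x, rfl⟩ := e.surjective v
    obtain ⟨y, rfl⟩ := e.surjective w
    simp [killing_apply, ofLieAlgebra_apply, opTrace_adRep_mul]
  rw [killing_eq]
  exact (LieAlgebra.IsKilling.killingForm_nondegenerate ℝ L).congr e

theorem derivAct_adRep (x : L) : derivAct (adRep e x) (ofLieAlgebra e) = 0 := by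
  rw [← ofLieAlgebra_apply, ← jacobiator_apply, (isLie_ofLieAlgebra e).jacobiator_eq_zero,
    zero_apply]

theorem transport_ofLieAlgebra (g : V ≃L[ℝ] V) :
    transport g (ofLieAlgebra e) = ofLieAlgebra (e.trans g.toLinearEquiv) :=
  rfl

theorem adRep_trans_of_commute {g : V ≃L[ℝ] V} {x : L}
    (h : Commute (g : V →L[ℝ] V) (adRep e x)) : adRep (e.trans g.toLinearEquiv) x = adRep e x := by
  ext v
  obtain ⟨y, rfl⟩ := (e.trans g.toLinearEquiv).surjective v
  rw [adRep_apply_apply]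
  simpa [adRep_apply_apply] using congr($h (e y))

end

variable [InnerProductSpace ℝ V]

theorem exists_adRep_eq_star [FiniteDimensional ℝ V] {e : L ≃ₗ[ℝ] V} [LieAlgebra.IsKilling ℝ L]
    (h : ∀ P, derivAct P (ofLieAlgebra e) = 0 → derivAct (star P) (ofLieAlgebra e) = 0) (x : L) :
    ∃ y, adRep e y = star (adRep e x) := by
  obtain ⟨v, hv⟩ := (isLie_ofLieAlgebra e).exists_eq_of_derivAct_eq_zero
    (nondegenerate_killing_ofLieAlgebra e) (h _ (derivAct_adRep e x))
  exact ⟨e.symm v, by rw [← ofLieAlgebra_apply, e.apply_symm_apply, hv]⟩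

theorem exists_lieHom_apply_eq_neg_star [CompleteSpace V] {ρ : L →ₗ⁅ℝ⁆ (V →L[ℝ] V)}
    (hρ : Function.Injective ρ) (hstar : ∀ x, ∃ y, ρ y = star (ρ x)) :
    ∃ θ : L →ₗ⁅ℝ⁆ L, ∀ x, ρ (θ x) = -star (ρ x) := by
  choose τ hτ using hstar
  refine ⟨{ toFun x := -τ x, map_add' x y := hρ ?_, map_smul' c x := hρ ?_,
            map_lie' {x y} := hρ ?_ }, fun x => ?_⟩
  · simp [hτ, add_comm]
  · simp [hτ]
  · simp [hτ, Ring.lie_def]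
  · simp [hτ]

section CartanInvolution

variable [FiniteDimensional ℝ V] {e : L ≃ₗ[ℝ] V} {θ : L →ₗ⁅ℝ⁆ L}
  [LieAlgebra.HasTrivialRadical ℝ L]

theorem apply_apply_of_adRep_eq_neg_star (hθ : ∀ x, adRep e (θ x) = -star (adRep e x)) (x : L) :
    θ (θ x) = x :=
  adRep_injective e (by rw [hθ, hθ, star_neg, star_star, neg_neg])

theorem neg_killingForm_pos_of_adRep_eq_neg_star {x : L} (hθ : adRep e (θ x) = -star (adRep e x))
    (hx : x ≠ 0) : 0 < -killingForm ℝ L x (θ x) := by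
  rw [← opTrace_adRep_mul e, hθ, mul_neg, map_neg, neg_neg, opTrace_mul_comm]
  exact opTrace_star_mul_self_pos ((map_ne_zero_iff _ (adRep_injective e)).mpr hx)

theorem lie_apply_eq_zero_of_isStarNormal {x : L} (hθ : adRep e (θ x) = -star (adRep e x))
    (hx : IsStarNormal (adRep e x)) : ⁅x, θ x⁆ = 0 := by
  refine adRep_injective e ?_
  rw [map_zero, LieHom.map_lie, hθ, lie_neg, hx.star_comm_self.symm.lie_eq, neg_zero]

end CartanInvolution

end OfLieAlgebra

end BilinOp

theorem exists_eq_add_of_lie_apply_eq_zero {L : Type*} [LieRing L] [LieAlgebra ℝ L]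
    {θ : L →ₗ⁅ℝ⁆ L} {X : L} (involutive : θ (θ X) = X) (h : ⁅X, θ X⁆ = 0) :
    ∃ E H : L, X = E + H ∧ θ E = E ∧ θ H = -H ∧ ⁅E, H⁆ = 0 := by
  refine ⟨(2⁻¹ : ℝ) • (X + θ X), (2⁻¹ : ℝ) • (X - θ X), by module, ?_, ?_, ?_⟩
  · rw [map_smul, map_add, involutive, add_comm]
  · rw [map_smul, map_sub, involutive, ← smul_neg, neg_sub]
  · have h' : ⁅θ X, X⁆ = 0 := by rw [← lie_skew, h, neg_zero]
    simp [h, h']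

open BilinOp

/-- Let `L` be a finite-dimensional real semisimple Lie algebra and
`X ∈ L` a semisimple element (i.e. `ad X` is diagonalizable over `ℂ`).  Then there is a
Cartan involution `θ` of `L` (an involutive automorphism whose associated form
`B_θ(Y, Z) = -⟨Y, θ Z⟩` is positive definite, `⟨·,·⟩` the Killing form) such that
`X = E + H` with `θ E = E` (i.e. `E ∈ k`), `θ H = -H` (i.e. `H ∈ s`) and `⁅E, H⁆ = 0`. -/
theorem semisimple_element_cartan_decomposition
    {L : Type*} [LieRing L] [LieAlgebra ℝ L] [Module.Finite ℝ L]
    [LieAlgebra.IsSemisimple ℝ L] (X : L)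
    (hX : Module.End.IsSemisimple
      (LinearMap.baseChange ℂ (LieAlgebra.ad ℝ L X : L →ₗ[ℝ] L))) :
    ∃ θ : L →ₗ⁅ℝ⁆ L, (∀ Y : L, θ (θ Y) = Y) ∧
      (∀ Y : L, Y ≠ 0 → 0 < -(killingForm ℝ L Y (θ Y))) ∧
      ∃ E H : L, X = E + H ∧ θ E = E ∧ θ H = -H ∧ ⁅E, H⁆ = 0 := by
  obtain ⟨n, e, normal : IsStarNormal (adRep e X)⟩ := exists_linearEquiv_isStarNormal_conj hX
  obtain ⟨g, commute_g, star_closed⟩ := exists_transport_derivAct_star_eq_zero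
    (isLie_ofLieAlgebra e) (nondegenerate_killing_ofLieAlgebra e) (derivAct_adRep e X)
  rw [transport_ofLieAlgebra] at star_closed
  obtain ⟨θ, hθ⟩ :=
    exists_lieHom_apply_eq_neg_star (adRep_injective _) (exists_adRep_eq_star star_closed)
  have involutive := apply_apply_of_adRep_eq_neg_star hθ
  have lie_eq_zero : ⁅X, θ X⁆ = 0 :=
    lie_apply_eq_zero_of_isStarNormal (hθ X) (by rwa [adRep_trans_of_commute e commute_g])
  exact ⟨θ, involutive, fun Y => neg_killingForm_pos_of_adRep_eq_neg_star (hθ Y),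
    exists_eq_add_of_lie_apply_eq_zero (involutive X) lie_eq_zero⟩
end

section
/- Let g ∈ GL(V) with Jordan decomposition g = e h u, and V = V_{λ₁} ⊕ ⋯ ⊕ V_{λ_n} the eigenspace decomposition of h with λ₁ > ⋯ > λ_n > 0. Then each V_{λ_k} is invariant under g, and the collection {ℙ(V_{λ₁}), …, ℙ(V_{λ_n})} is a Morse decomposition for the induced flow on ℙ(V). Moreover the stable set of ℙ(V_{λ_i}) is {[v_i + v_{i+1} + ⋯ + v_n] : v_k ∈ V_{λ_k}, v_i ≠ 0}. -/
open Filter Topology LinearAlgebra.Projectivization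

instance projectivizationTopology {K V : Type*} [DivisionRing K] [AddCommGroup V]
    [Module K V] [TopologicalSpace V] : TopologicalSpace (ℙ K V) :=
  instTopologicalSpaceQuotient

/-- The flow induced on projective space by iterating a linear automorphism. -/
def projFlow {K V : Type*} [Field K] [AddCommGroup V] [Module K V]
    (g : V ≃ₗ[K] V) (t : ℤ) : ℙ K V → ℙ K V :=
  Projectivization.map ((g ^ t : V ≃ₗ[K] V) : V →ₗ[K] V) (g ^ t).injective

/-- A Morse decomposition of a discrete-time flow on a topological space: a finite family
of pairwise disjoint compact invariant sets containing all omega and alpha limit sets,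
with the property that a point whose omega and alpha limit sets lie in the same member
belongs to that member. -/
def IsMorseDecomposition {P : Type*} [TopologicalSpace P] (φ : ℤ → P → P)
    {n : ℕ} (M : Fin n → Set P) : Prop :=
  (∀ j, IsCompact (M j)) ∧
  (∀ j t, φ t '' M j = M j) ∧
  Pairwise (Function.onFun Disjoint M) ∧
  (∀ x : P, omegaLimit atTop φ {x} ⊆ ⋃ j, M j ∧ omegaLimit atBot φ {x} ⊆ ⋃ j, M j) ∧
  (∀ (x : P) (j : Fin n), omegaLimit atTop φ {x} ⊆ M j →
    omegaLimit atBot φ {x} ⊆ M j → x ∈ M j)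

/-!
Write `g = h a` with `a = e u`, which commutes with `h`. Since `u` is unipotent, the complex
spectrum of `a` is that of `e` and lies on the unit circle, so by Gelfand's formula the powers of
`a`, positive and negative, grow slower than every exponential. On `V_{λ_k}` we have
`g ^ t = λ_k ^ t a ^ t`, hence as `t → ∞` a nonzero orbit in `V_{λ_i}` outgrows every orbit in
`V_{λ_k}` for `k > i`: if `v_i` is the first nonzero component of `v`, the direction of `g ^ t v`
approaches `V_{λ_i}`. As `t → -∞` the last nonzero component wins in the same way. A point whose two
limit sets lie in the same `ℙ(V_{λ_i})` therefore has only its `i`-th component nonzero.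
-/

open Asymptotics

section OmegaLimit

variable {τ α β γ : Type*} [TopologicalSpace β] [TopologicalSpace γ] [T2Space γ]

theorem omegaLimit_singleton_subset_preimage {f : Filter τ} {φ : τ → α → β} {d : β → γ}
    (hd : Continuous d) {x : α} {c : γ} (hx : Tendsto (fun t => d (φ t x)) f (𝓝 c)) :
    omegaLimit f φ {x} ⊆ d ⁻¹' {c} := by
  intro y hy
  rw [mem_omegaLimit_singleton_iff_mapClusterPt] at hy
  have hcluster : MapClusterPt (d y) f (fun t => d (φ t x)) :=
    hy.tendsto_comp hd.continuousAt
  exact eq_of_nhds_neBot (hcluster.clusterPt.mono hx)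

end OmegaLimit

section Projectivization

variable {K V : Type*} [Field K] [AddCommGroup V] [Module K V]

theorem rep_mk_mem_iff (W : Submodule K V) {v : V} (hv : v ≠ 0) :
    (Projectivization.mk K v hv).rep ∈ W ↔ v ∈ W := by
  obtain ⟨c, hc⟩ := Projectivization.exists_smul_eq_mk_rep K v hv
  rw [← hc, Units.smul_def]
  exact W.smul_mem_iff c.ne_zero

theorem projFlow_eq_mk (g : V ≃ₗ[K] V) (t : ℤ) (p : ℙ K V) :
    projFlow g t p = Projectivization.mk K ((g ^ t) p.rep) (by simpa using p.rep_nonzero) := by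
  conv_lhs => rw [← p.mk_rep]
  rfl

theorem projFlow_projFlow_neg (g : V ≃ₗ[K] V) (t : ℤ) (p : ℙ K V) :
    projFlow g t (projFlow g (-t) p) = p := by
  induction p using Projectivization.ind with
  | h v hv =>
    have hcancel : (g ^ t) ((g ^ (-t)) v) = v := by
      rw [← LinearEquiv.mul_apply, ← zpow_add, add_neg_cancel, zpow_zero, LinearEquiv.coe_one, id]
    simp only [projFlow, Projectivization.map_mk, LinearEquiv.coe_coe, hcancel]

theorem image_projFlow_setOf_rep_mem {g : V ≃ₗ[K] V} {W : Submodule K V}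
    (hgW : ∀ t : ℤ, ∀ v ∈ W, (g ^ t) v ∈ W) (t : ℤ) :
    projFlow g t '' {p | p.rep ∈ W} = {p | p.rep ∈ W} := by
  have hmaps (s : ℤ) (p : ℙ K V) (hp : p.rep ∈ W) : (projFlow g s p).rep ∈ W := by
    rw [projFlow_eq_mk, rep_mk_mem_iff]
    exact hgW s _ hp
  refine Set.Subset.antisymm (Set.image_subset_iff.2 (hmaps t)) fun p hp => ?_
  exact ⟨projFlow g (-t) p, hmaps (-t) p hp, projFlow_projFlow_neg g t p⟩

theorem disjoint_setOf_rep_mem {W W' : Submodule K V} (h : Disjoint W W') :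
    Disjoint {p : ℙ K V | p.rep ∈ W} {p | p.rep ∈ W'} :=
  Set.disjoint_left.2 fun p hp hp' =>
    p.rep_nonzero (Submodule.disjoint_def.1 h _ hp hp')

end Projectivization

theorem compactSpace_projectivization (𝕜 V : Type*) [RCLike 𝕜] [NormedAddCommGroup V]
    [NormedSpace 𝕜 V] [FiniteDimensional 𝕜 V] : CompactSpace (ℙ 𝕜 V) := by
  have : ProperSpace V := FiniteDimensional.proper 𝕜 V
  have : CompactSpace (Metric.sphere (0 : V) 1) :=
    isCompact_iff_compactSpace.1 (isCompact_sphere 0 1)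
  have hne (x : Metric.sphere (0 : V) 1) : (x : V) ≠ 0 := ne_zero_of_mem_unit_sphere x
  let q : Metric.sphere (0 : V) 1 → ℙ 𝕜 V := fun x => Projectivization.mk 𝕜 x (hne x)
  have hq : Continuous q :=
    continuous_quotient_mk'.comp (continuous_subtype_val.subtype_mk hne)
  have hsurj : Function.Surjective q := by
    intro p
    induction p using Projectivization.ind with
    | h v hv =>
      have hnorm : ‖((‖v‖⁻¹ : ℝ) : 𝕜) • v‖ = 1 := by
        simp [norm_smul, hv]
      exact ⟨⟨((‖v‖⁻¹ : ℝ) : 𝕜) • v, mem_sphere_zero_iff_norm.2 hnorm⟩,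
        (Projectivization.mk_eq_mk_iff' _ _ _ _ _).2 ⟨_, rfl⟩⟩
  exact hsurj.compactSpace hq

section RelDist

variable {𝕜 V : Type*} [NormedField 𝕜] [NormedAddCommGroup V] [NormedSpace 𝕜 V]

/-- The distance from a line to the subspace `W`, measured at a unit vector of the line (the sine
of their angle, in a Euclidean space). It is a continuous function on projective space whose
zero set is the set of lines in `W`, for `W` closed. -/
noncomputable def relDist (W : Submodule 𝕜 V) (p : ℙ 𝕜 V) : ℝ :=
  ‖W.mkQ p.rep‖ / ‖p.rep‖

theorem relDist_mk (W : Submodule 𝕜 V) {v : V} (hv : v ≠ 0) :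
    relDist W (Projectivization.mk 𝕜 v hv) = ‖W.mkQ v‖ / ‖v‖ := by
  obtain ⟨c, hc⟩ := Projectivization.exists_smul_eq_mk_rep 𝕜 v hv
  rw [relDist, ← hc, Units.smul_def, map_smul, norm_smul, norm_smul,
    mul_div_mul_left _ _ (norm_ne_zero_iff.2 c.ne_zero)]

theorem continuous_relDist (W : Submodule 𝕜 V) : Continuous (relDist W) := by
  have hlift : Continuous fun v : {v : V // v ≠ 0} => ‖W.mkQ v‖ / ‖(v : V)‖ :=
    (W.isOpenQuotientMap_mkQ.continuous.comp continuous_subtype_val).norm.div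
      continuous_subtype_val.norm fun v => norm_ne_zero_iff.2 v.2
  exact continuous_coinduced_dom.2 (hlift.congr fun v => (relDist_mk W v.2).symm)

theorem relDist_eq_zero_iff {W : Submodule 𝕜 V} (hW : IsClosed (W : Set V)) {p : ℙ 𝕜 V} :
    relDist W p = 0 ↔ p.rep ∈ W := by
  have : IsClosed (W.toAddSubgroup : Set V) := hW
  rw [relDist, div_eq_zero_iff, or_iff_left (norm_ne_zero_iff.2 p.rep_nonzero)]
  exact QuotientAddGroup.norm_mk_eq_zero (S := W.toAddSubgroup)

theorem isClosed_setOf_rep_mem {W : Submodule 𝕜 V} (hW : IsClosed (W : Set V)) :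
    IsClosed {p : ℙ 𝕜 V | p.rep ∈ W} := by
  simpa only [relDist_eq_zero_iff hW] using
    isClosed_eq (continuous_relDist W) (continuous_const (y := 0))

-- `w` becomes negligible, so the distance of the orbit of `[v + w]` to `W` tends to zero.
theorem omegaLimit_projFlow_subset {F : Filter ℤ} {g : V ≃ₗ[𝕜] V} {W : Submodule 𝕜 V}
    (hW : IsClosed (W : Set V)) (hgW : ∀ t : ℤ, ∀ v ∈ W, (g ^ t) v ∈ W) {v w : V} (hv : v ∈ W)
    (hw : (fun t : ℤ => (g ^ t) w) =o[F] fun t => (g ^ t) v) {p : ℙ 𝕜 V} (hp : v + w = p.rep) :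
    omegaLimit F (projFlow g) {p} ⊆ {q | q.rep ∈ W} := by
  have hmk (t : ℤ) : W.mkQ ((g ^ t) p.rep) = W.mkQ ((g ^ t) w) := by
    rw [← hp, map_add, map_add, W.mkQ_apply ((g ^ t) v),
      (Submodule.Quotient.mk_eq_zero W).2 (hgW t v hv), zero_add]
  have hquot : (fun t : ℤ => W.mkQ ((g ^ t) w)) =O[F] fun t => (g ^ t) w :=
    .of_bound' (.of_forall fun t => Submodule.Quotient.norm_mk_le W _)
  have hsum : (fun t : ℤ => (g ^ t) v) =O[F] fun t => (g ^ t) p.rep :=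
    hw.right_isBigO_add.congr_right fun t => by rw [← hp, map_add, add_comm]
  have hlim : Tendsto (fun t => relDist W (projFlow g t p)) F (𝓝 0) :=
    (hquot.trans_isLittleO (hw.trans_isBigO hsum)).norm_norm.tendsto_div_nhds_zero.congr
      fun t => by rw [projFlow_eq_mk, relDist_mk, hmk]
  exact (omegaLimit_singleton_subset_preimage (continuous_relDist W) hlim).trans
    fun q hq => (relDist_eq_zero_iff hW).1 hq

end RelDist

section LeadingTerm

variable {R M ι : Type*} [Ring R] [AddCommGroup M] [Module R M] [LinearOrder ι]
  {W : ι → Submodule R M}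

theorem exists_add_mem_iSup_gt {x : M} (hx : x ∈ ⨆ k, W k) (hx0 : x ≠ 0) :
    ∃ i, ∃ v ∈ W i, v ≠ 0 ∧ ∃ w ∈ ⨆ k > i, W k, v + w = x := by
  obtain ⟨f, hfW, rfl⟩ := (Submodule.mem_iSup_iff_exists_finsupp _ _).1 hx
  have hne : f.support.Nonempty := Finsupp.support_nonempty_iff.2 (by rintro rfl; simp at hx0)
  let i := f.support.min' hne
  have hi : i ∈ f.support := Finset.min'_mem _ _
  refine ⟨i, f i, hfW i, Finsupp.mem_support_iff.1 hi, ∑ k ∈ f.support.erase i, f k, ?_,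
    Finset.add_sum_erase _ _ hi⟩
  refine Submodule.sum_mem _ fun k hk => ?_
  have hik : i < k := Finset.min'_lt_of_mem_erase_min' _ _ hk
  exact Submodule.mem_iSup_of_mem k (Submodule.mem_iSup_of_mem hik (hfW k))

theorem iSup_ge_eq_sup_iSup_gt (i : ι) : ⨆ k ≥ i, W k = W i ⊔ ⨆ k > i, W k := by
  have hinsert := iSup_insert (s := Set.Ioi i) (f := W) (b := i)
  rwa [Set.Ioi_insert] at hinsert

theorem exists_add_mem_iff_mem_iSup_ge_notMem_iSup_gt (hW : iSupIndep W) {x : M} {i : ι} :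
    (∃ v ∈ W i, v ≠ 0 ∧ ∃ w ∈ ⨆ k > i, W k, v + w = x) ↔
      x ∈ ⨆ k ≥ i, W k ∧ x ∉ ⨆ k > i, W k := by
  have hdisj : Disjoint (W i) (⨆ k > i, W k) := hW.disjoint_biSup (y := Set.Ioi i) (by simp)
  rw [iSup_ge_eq_sup_iSup_gt, Submodule.mem_sup]
  constructor
  · rintro ⟨v, hv, hv0, w, hw, rfl⟩
    refine ⟨⟨v, hv, w, hw, rfl⟩, fun hvw => hv0 ?_⟩
    exact Submodule.disjoint_def.1 hdisj v hv ((Submodule.add_mem_iff_left _ hw).1 hvw)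
  · rintro ⟨⟨v, hv, w, hw, rfl⟩, hvw⟩
    refine ⟨v, hv, ?_, w, hw, rfl⟩
    rintro rfl
    exact hvw (by rwa [zero_add])

theorem mem_of_mem_iSup_ge_of_mem_iSup_le (hW : iSupIndep W) {x : M} {i : ι}
    (hge : x ∈ ⨆ k ≥ i, W k) (hle : x ∈ ⨆ k ≤ i, W k) : x ∈ W i := by
  have hdisj : Disjoint (⨆ k ≥ i, W k) (⨆ k < i, W k) :=
    hW.disjoint_biSup_biSup (s := Set.Ici i) (t := Set.Iio i)
      (Set.disjoint_left.2 fun _ => not_lt_of_ge)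
  have hle_eq : ⨆ k ≤ i, W k = W i ⊔ ⨆ k < i, W k := iSup_ge_eq_sup_iSup_gt (ι := ιᵒᵈ) i
  obtain ⟨v, hv, w, hw, rfl⟩ := Submodule.mem_sup.1 (hle_eq ▸ hle)
  have hv_ge : v ∈ ⨆ k ≥ i, W k := Submodule.mem_iSup_of_mem i (Submodule.mem_iSup_of_mem le_rfl hv)
  have hw0 : w = 0 :=
    Submodule.disjoint_def.1 hdisj w ((Submodule.add_mem_iff_right _ hv_ge).1 hge) hw
  rwa [hw0, add_zero]

end LeadingTerm

/-- A decomposition of `V` into independent subspaces, invariant under the flow of `g` and indexed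
by a linear order, in which every nonzero orbit of a subspace outgrows, along the filter `F` of
times, every orbit of a later one. Backward time is covered by `F = atBot` and the reversed order
on the indices. -/
structure IsDominatedSplitting {𝕜 V ι : Type*} [NormedField 𝕜] [NormedAddCommGroup V]
    [NormedSpace 𝕜 V] [LinearOrder ι] (F : Filter ℤ) (g : V ≃ₗ[𝕜] V) (W : ι → Submodule 𝕜 V) :
    Prop where
  indep : iSupIndep W
  iSup_eq_top : ⨆ k, W k = ⊤
  zpow_mem (k : ι) (t : ℤ) : ∀ v ∈ W k, (g ^ t) v ∈ W k
  isLittleO {i k : ι} (hik : i < k) {v w : V} (hv : v ∈ W i) (hv0 : v ≠ 0) (hw : w ∈ W k) :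
    (fun t : ℤ => (g ^ t) w) =o[F] fun t => (g ^ t) v

namespace IsDominatedSplitting

section NormedField

variable {𝕜 V ι : Type*} [NormedField 𝕜] [NormedAddCommGroup V] [NormedSpace 𝕜 V] [LinearOrder ι]
  {F : Filter ℤ} {g : V ≃ₗ[𝕜] V} {W : ι → Submodule 𝕜 V}

theorem map_eq (hW : IsDominatedSplitting F g W) (k : ι) : (W k).map (g : V →ₗ[𝕜] V) = W k := by
  refine le_antisymm ?_ fun v hv => ?_
  · rintro _ ⟨v, hv, rfl⟩
    simpa using hW.zpow_mem k 1 v hv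
  · exact ⟨(g ^ (-1 : ℤ)) v, hW.zpow_mem k (-1) v hv, by
      rw [zpow_neg_one]; exact g.apply_symm_apply v⟩

theorem isLittleO_of_mem_iSup_gt (hW : IsDominatedSplitting F g W) {i : ι} {v w : V}
    (hv : v ∈ W i) (hv0 : v ≠ 0) (hw : w ∈ ⨆ k > i, W k) :
    (fun t : ℤ => (g ^ t) w) =o[F] fun t => (g ^ t) v := by
  rw [iSup_subtype'] at hw
  refine Submodule.iSup_induction _
    (motive := fun w => (fun t : ℤ => (g ^ t) w) =o[F] fun t => (g ^ t) v) hw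
    (fun k w hw => hW.isLittleO k.2 hv hv0 hw) ?_ fun x y hx hy => ?_
  · simpa only [map_zero] using isLittleO_zero _ _
  · simpa only [map_add] using hx.add hy

end NormedField

section RCLike

variable {𝕜 V ι : Type*} [RCLike 𝕜] [NormedAddCommGroup V] [NormedSpace 𝕜 V]
  [FiniteDimensional 𝕜 V] [LinearOrder ι] {F : Filter ℤ} {g : V ≃ₗ[𝕜] V} {W : ι → Submodule 𝕜 V}

theorem omegaLimit_subset (hW : IsDominatedSplitting F g W) {p : ℙ 𝕜 V} {i : ι} {v w : V}
    (hv : v ∈ W i) (hv0 : v ≠ 0) (hw : w ∈ ⨆ k > i, W k) (hp : v + w = p.rep) :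
    omegaLimit F (projFlow g) {p} ⊆ {q | q.rep ∈ W i} :=
  omegaLimit_projFlow_subset (W i).closed_of_finiteDimensional (hW.zpow_mem i) hv
    (hW.isLittleO_of_mem_iSup_gt hv hv0 hw) hp

theorem exists_omegaLimit_subset (hW : IsDominatedSplitting F g W) (p : ℙ 𝕜 V) :
    ∃ i, ∃ v ∈ W i, v ≠ 0 ∧ (∃ w ∈ ⨆ k > i, W k, v + w = p.rep) ∧
      omegaLimit F (projFlow g) {p} ⊆ {q | q.rep ∈ W i} := by
  have hp : p.rep ∈ ⨆ k, W k := hW.iSup_eq_top ▸ Submodule.mem_top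
  obtain ⟨i, v, hv, hv0, w, hw, hvw⟩ := exists_add_mem_iSup_gt hp p.rep_nonzero
  exact ⟨i, v, hv, hv0, ⟨w, hw, hvw⟩, hW.omegaLimit_subset hv hv0 hw hvw⟩

theorem eq_of_omegaLimit_subset [F.NeBot] (hW : IsDominatedSplitting F g W) {p : ℙ 𝕜 V} {i j : ι}
    (hi : omegaLimit F (projFlow g) {p} ⊆ {q | q.rep ∈ W i})
    (hj : omegaLimit F (projFlow g) {p} ⊆ {q | q.rep ∈ W j}) : i = j := by
  have := compactSpace_projectivization 𝕜 V
  obtain ⟨q, hq⟩ := nonempty_omegaLimit F (projFlow g) {p} (Set.singleton_nonempty p)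
  by_contra hij
  exact Set.disjoint_left.1 (disjoint_setOf_rep_mem (hW.indep.pairwiseDisjoint hij))
    (hi hq) (hj hq)

theorem omegaLimit_subset_iff [F.NeBot] (hW : IsDominatedSplitting F g W) {p : ℙ 𝕜 V} {i : ι} :
    omegaLimit F (projFlow g) {p} ⊆ {q | q.rep ∈ W i} ↔
      p.rep ∈ ⨆ k ≥ i, W k ∧ p.rep ∉ ⨆ k > i, W k := by
  rw [← exists_add_mem_iff_mem_iSup_ge_notMem_iSup_gt hW.indep]
  constructor
  · intro hi
    obtain ⟨j, v, hv, hv0, hw, hj⟩ := hW.exists_omegaLimit_subset p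
    obtain rfl := hW.eq_of_omegaLimit_subset hi hj
    exact ⟨v, hv, hv0, hw⟩
  · rintro ⟨v, hv, hv0, w, hw, hp⟩
    exact hW.omegaLimit_subset hv hv0 hw hp

theorem omegaLimit_subset_iUnion (hW : IsDominatedSplitting F g W) (p : ℙ 𝕜 V) :
    omegaLimit F (projFlow g) {p} ⊆ ⋃ k, {q | q.rep ∈ W k} := by
  obtain ⟨i, -, -, -, -, hi⟩ := hW.exists_omegaLimit_subset p
  exact hi.trans (Set.subset_iUnion (fun k => {q : ℙ 𝕜 V | q.rep ∈ W k}) i)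

theorem isMorseDecomposition {n : ℕ} {W : Fin n → Submodule 𝕜 V}
    (hTop : IsDominatedSplitting atTop g W)
    (hBot : IsDominatedSplitting atBot g (W ∘ OrderDual.ofDual)) :
    IsMorseDecomposition (projFlow g) fun k => {p | p.rep ∈ W k} := by
  have := compactSpace_projectivization 𝕜 V
  refine ⟨fun k => ?_, fun k => ?_, fun i j hij => ?_, fun p => ⟨?_, ?_⟩, fun p k hω hα => ?_⟩
  · exact (isClosed_setOf_rep_mem (W k).closed_of_finiteDimensional).isCompact
  · exact image_projFlow_setOf_rep_mem (hTop.zpow_mem k)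
  · exact disjoint_setOf_rep_mem (hTop.indep.pairwiseDisjoint hij)
  · exact hTop.omegaLimit_subset_iUnion p
  · exact hBot.omegaLimit_subset_iUnion p
  · exact mem_of_mem_iSup_ge_of_mem_iSup_le hTop.indep (hTop.omegaLimit_subset_iff.1 hω).1
      (hBot.omegaLimit_subset_iff (i := OrderDual.toDual k).1 hα).1

end RCLike

end IsDominatedSplitting

section Spectrum

theorem spectrum_add_subset_of_isNilpotent {R A : Type*} [CommRing R] [Ring A] [Algebra R A]
    {x y : A} (hxy : Commute x y) (hy : IsNilpotent y) :
    spectrum R (x + y) ⊆ spectrum R x := by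
  intro μ hμ
  contrapose! hμ
  rw [spectrum.notMem_iff] at hμ ⊢
  have hcomm : Commute (-y) (algebraMap R A μ - x) :=
    ((Algebra.commute_algebraMap_right μ y).sub_right hxy.symm).neg_left
  simpa only [sub_add_eq_sub_sub, ← sub_eq_add_neg] using
    hy.neg.isUnit_add_left_of_commute hμ hcomm

theorem spectrum_mul_subset_of_isNilpotent_sub_one {R A : Type*} [CommRing R] [Ring A]
    [Algebra R A] {x y : A} (hxy : Commute x y) (hy : IsNilpotent (y - 1)) :
    spectrum R (x * y) ⊆ spectrum R x := by
  have hcomm : Commute x (y - 1) := hxy.sub_right (.one_right x)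
  have hnil : IsNilpotent (x * (y - 1)) := hcomm.isNilpotent_mul_left hy
  simpa only [mul_sub, mul_one, add_sub_cancel] using
    spectrum_add_subset_of_isNilpotent (R := R) ((Commute.refl x).mul_right hcomm) hnil

theorem spectrum_baseChange_mul_subset {R A M : Type*} [CommRing R] [CommRing A] [Algebra R A]
    [AddCommGroup M] [Module R M] {x y : Module.End R M} (hxy : Commute x y)
    (hy : IsNilpotent (y - 1)) :
    spectrum A (LinearMap.baseChange A (x * y)) ⊆ spectrum A (LinearMap.baseChange A x) := by
  let Φ := Module.End.baseChangeHom R A M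
  have hnil : IsNilpotent (Φ y - 1) := by simpa only [map_sub, map_one] using hy.map Φ
  rw [LinearMap.baseChange_mul]
  exact spectrum_mul_subset_of_isNilpotent_sub_one (hxy.map Φ) hnil

theorem inv_mem_spectrum_baseChange_iff {K L V : Type*} [Field K] [Field L] [Algebra K L]
    [AddCommGroup V] [Module K V] {a : V ≃ₗ[K] V} {μ : L} :
    μ⁻¹ ∈ spectrum L (LinearMap.baseChange L (a : V →ₗ[K] V)) ↔
      μ ∈ spectrum L (LinearMap.baseChange L ((a⁻¹ : V ≃ₗ[K] V) : V →ₗ[K] V)) := by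
  let b : (Module.End L (TensorProduct K L V))ˣ :=
    (LinearMap.GeneralLinearGroup.generalLinearEquiv L _).symm (a.baseChange K L V V)
  have hb_inv : (↑b⁻¹ : Module.End L (TensorProduct K L V)) =
      LinearMap.baseChange L ((a⁻¹ : V ≃ₗ[K] V) : V →ₗ[K] V) := by
    rw [← map_inv, ← LinearEquiv.baseChange_inv]
    rfl
  have hb : (b : Module.End L (TensorProduct K L V)) = LinearMap.baseChange L (a : V →ₗ[K] V) := rfl
  rw [← hb, ← hb_inv, spectrum.inv₀_mem_iff]

open scoped NNReal in
theorem isBigO_pow_of_spectralRadius_lt {A : Type*} [NormedRing A] [NormedAlgebra ℂ A]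
    [CompleteSpace A] {x : A} {r : ℝ≥0} (hx : spectralRadius ℂ x < r) :
    (fun n : ℕ => x ^ n) =O[atTop] fun n => (r : ℝ) ^ n := by
  have hgelfand := spectrum.pow_nnnorm_pow_one_div_tendsto_nhds_spectralRadius x
  refine .of_bound' ?_
  filter_upwards [hgelfand.eventually_lt_const hx, eventually_ne_atTop 0] with n hn hn0
  rw [one_div, ENNReal.rpow_inv_lt_iff (by positivity), ENNReal.rpow_natCast] at hn
  rw [Real.norm_of_nonneg (by positivity)]
  exact_mod_cast hn.le

theorem exists_norm_pow_le_of_spectrum_subset_closedBall {A : Type*} [NormedRing A]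
    [NormedAlgebra ℂ A] [CompleteSpace A] {x : A} (hx : ∀ μ ∈ spectrum ℂ x, ‖μ‖ ≤ 1) {r : ℝ}
    (hr : 1 < r) : ∃ C, ∀ n : ℕ, ‖x ^ n‖ ≤ C * r ^ n := by
  lift r to NNReal using by positivity
  have hrad : spectralRadius ℂ x < r :=
    (iSup₂_le fun μ hμ => by exact_mod_cast hx μ hμ : spectralRadius ℂ x ≤ 1).trans_lt
      (by exact_mod_cast hr)
  obtain ⟨C, -, hC⟩ := bound_of_isBigO_nat_atTop (isBigO_pow_of_spectralRadius_lt hrad)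
  exact ⟨C, fun n => by simpa using hC (x := n) (by positivity)⟩

end Spectrum

section Complexification

open scoped TensorProduct

variable {V : Type*} [NormedAddCommGroup V] [NormedSpace ℝ V] [FiniteDimensional ℝ V]

theorem exists_norm_pow_apply_le_of_spectrum_baseChange {f : Module.End ℝ V}
    (hf : ∀ μ ∈ spectrum ℂ (LinearMap.baseChange ℂ f), ‖μ‖ ≤ 1) {r : ℝ} (hr : 1 < r) :
    ∃ C, ∀ (n : ℕ) (v : V), ‖(f ^ n) v‖ ≤ C * r ^ n * ‖v‖ := by
  -- `ℂ ⊗ V` carries no norm, so we transport the complexification of `f` to a space `ℂᵈ`.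
  let φ : ℂ ⊗[ℝ] V ≃ₗ[ℂ] (Fin (Module.finrank ℂ (ℂ ⊗[ℝ] V)) → ℂ) :=
    (Module.finBasis ℂ (ℂ ⊗[ℝ] V)).equivFun
  let Φ := (φ.conjAlgEquiv ℂ).trans (Module.End.toContinuousLinearMap _)
  let j : V →ₗ[ℝ] (Fin (Module.finrank ℂ (ℂ ⊗[ℝ] V)) → ℂ) :=
    (φ.toLinearMap.restrictScalars ℝ).comp (TensorProduct.mk ℝ ℂ V 1)
  have hj : Function.Injective j :=
    φ.injective.comp (Module.Flat.tensorProduct_mk_injective ℝ V ℂ)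
  have hjf (n : ℕ) (v : V) : j ((f ^ n) v) = (Φ (f.baseChange ℂ) ^ n) (j v) := by
    rw [← map_pow, ← LinearMap.baseChange_pow]
    change φ (1 ⊗ₜ (f ^ n) v) = φ ((f ^ n).baseChange ℂ (φ.symm (φ (1 ⊗ₜ v))))
    rw [φ.symm_apply_apply, LinearMap.baseChange_tmul]
  obtain ⟨C, hC⟩ := exists_norm_pow_le_of_spectrum_subset_closedBall
    (by rwa [AlgEquiv.spectrum_eq Φ]) hr
  obtain ⟨K, -, hK⟩ := j.injective_iff_antilipschitz.1 hj
  refine ⟨K * C * ‖LinearMap.toContinuousLinearMap j‖, fun n v => ?_⟩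
  calc ‖(f ^ n) v‖ ≤ K * ‖(Φ (f.baseChange ℂ) ^ n) (j v)‖ :=
        hjf n v ▸ hK.le_mul_norm (map_zero j) _
    _ ≤ K * (C * r ^ n * (‖LinearMap.toContinuousLinearMap j‖ * ‖v‖)) := by
        gcongr
        exact ContinuousLinearMap.le_of_opNorm_le_of_le _ (hC n)
          ((LinearMap.toContinuousLinearMap j).le_opNorm v)
    _ = K * C * ‖LinearMap.toContinuousLinearMap j‖ * r ^ n * ‖v‖ := by ring

end Complexification

section Eigenspace

variable {K V : Type*} [Field K] [AddCommGroup V] [Module K V] {h a : V ≃ₗ[K] V} {μ : K} {v : V}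

theorem mem_eigenspace_inv (hv : v ∈ Module.End.eigenspace (h : V →ₗ[K] V) μ) :
    v ∈ Module.End.eigenspace ((h⁻¹ : V ≃ₗ[K] V) : V →ₗ[K] V) μ⁻¹ := by
  rw [Module.End.mem_eigenspace_iff, LinearEquiv.coe_coe] at hv ⊢
  change h.symm v = μ⁻¹ • v
  rw [LinearEquiv.symm_apply_eq, map_smul, hv]
  rcases eq_or_ne μ 0 with rfl | hμ
  · simpa using hv
  · rw [inv_smul_smul₀ hμ]

theorem zpow_apply_mem_eigenspace (hha : Commute h a) (t : ℤ)
    (hv : v ∈ Module.End.eigenspace (h : V →ₗ[K] V) μ) :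
    (a ^ t) v ∈ Module.End.eigenspace (h : V →ₗ[K] V) μ := by
  rw [Module.End.mem_eigenspace_iff, LinearEquiv.coe_coe] at hv ⊢
  rw [← LinearEquiv.mul_apply, (hha.zpow_right t).eq, LinearEquiv.mul_apply, hv, map_smul]

theorem mul_pow_apply_of_mem_eigenspace (hha : Commute h a) (n : ℕ)
    (hv : v ∈ Module.End.eigenspace (h : V →ₗ[K] V) μ) :
    ((h * a) ^ n) v = μ ^ n • (a ^ n) v := by
  have hpow : (h ^ n) v = μ ^ n • v := by
    induction n with
    | zero => simp
    | succ n ih =>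
      rw [pow_succ', LinearEquiv.mul_apply, ih, map_smul, ← LinearEquiv.coe_coe,
        Module.End.mem_eigenspace_iff.1 hv, smul_smul, pow_succ]
  rw [hha.eq, hha.symm.mul_pow, LinearEquiv.mul_apply, hpow, map_smul]

end Eigenspace

/-- The norms of the iterates of `a`, forward and backward in time, grow slower than every
exponential, uniformly in the initial vector. -/
def HasSubexponentialGrowth {𝕜 V : Type*} [NormedField 𝕜] [NormedAddCommGroup V]
    [NormedSpace 𝕜 V] (a : V ≃ₗ[𝕜] V) : Prop :=
  ∀ r : ℝ, 1 < r → ∃ C, ∀ (t : ℤ) (v : V), ‖(a ^ t) v‖ ≤ C * r ^ t.natAbs * ‖v‖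

namespace HasSubexponentialGrowth

variable {𝕜 V : Type*} [NormedField 𝕜] [NormedAddCommGroup V] [NormedSpace 𝕜 V]
  {h a : V ≃ₗ[𝕜] V} {μ ν : 𝕜} {v w : V}

theorem inv (ha : HasSubexponentialGrowth a) : HasSubexponentialGrowth a⁻¹ := by
  intro r hr
  obtain ⟨C, hC⟩ := ha r hr
  exact ⟨C, fun t v => by simpa only [inv_zpow', Int.natAbs_neg] using hC (-t) v⟩

theorem isBigO_smul_pow (ha : HasSubexponentialGrowth a) {r : ℝ} (hr : 1 < r) (ν : 𝕜) (w : V) :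
    (fun n : ℕ => ν ^ n • (a ^ n) w) =O[atTop] fun n => (‖ν‖ * r) ^ n := by
  obtain ⟨C, hC⟩ := ha r hr
  refine .of_bound (C * ‖w‖) (.of_forall fun n => ?_)
  calc ‖ν ^ n • (a ^ n) w‖ = ‖ν‖ ^ n * ‖(a ^ n) w‖ := by rw [norm_smul, norm_pow]
    _ ≤ ‖ν‖ ^ n * (C * r ^ n * ‖w‖) := by gcongr; simpa using hC n w
    _ = C * ‖w‖ * ‖(‖ν‖ * r) ^ n‖ := by rw [Real.norm_of_nonneg (by positivity)]; ring

theorem isBigO_pow_smul (ha : HasSubexponentialGrowth a) {r : ℝ} (hr : 1 < r) (μ : 𝕜)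
    (hv : v ≠ 0) : (fun n : ℕ => (‖μ‖ / r) ^ n) =O[atTop] fun n => μ ^ n • (a ^ n) v := by
  obtain ⟨C, hC⟩ := ha r hr
  refine .of_bound (C / ‖v‖) (.of_forall fun n => ?_)
  have hback : ‖v‖ ≤ C * r ^ n * ‖(a ^ n) v‖ := by simpa using hC (-n) ((a ^ n) v)
  have hv' : 0 < ‖v‖ := norm_pos_iff.2 hv
  calc ‖(‖μ‖ / r) ^ n‖ = ‖μ‖ ^ n / r ^ n / ‖v‖ * ‖v‖ := by
        rw [Real.norm_of_nonneg (by positivity), div_mul_cancel₀ _ hv'.ne', div_pow]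
    _ ≤ ‖μ‖ ^ n / r ^ n / ‖v‖ * (C * r ^ n * ‖(a ^ n) v‖) := by gcongr
    _ = C / ‖v‖ * ‖μ ^ n • (a ^ n) v‖ := by rw [norm_smul, norm_pow]; field_simp

theorem isLittleO_smul_pow (ha : HasSubexponentialGrowth a) (hνμ : ‖ν‖ < ‖μ‖) (hv : v ≠ 0)
    (w : V) : (fun n : ℕ => ν ^ n • (a ^ n) w) =o[atTop] fun n => μ ^ n • (a ^ n) v := by
  obtain ⟨r, hr, hr1⟩ : ∃ r : ℝ, ‖ν‖ * r * r < ‖μ‖ ∧ 1 < r := by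
    have hlim : Tendsto (fun r : ℝ => ‖ν‖ * r * r) (𝓝[>] 1) (𝓝 (‖ν‖ * 1 * 1)) :=
      (Continuous.tendsto (by fun_prop) 1).mono_left nhdsWithin_le_nhds
    exact ((hlim.eventually_lt_const (by simpa using hνμ)).and self_mem_nhdsWithin).exists
  have hrates : ‖ν‖ * r < ‖μ‖ / r := (lt_div_iff₀ (by positivity)).2 hr
  exact (ha.isBigO_smul_pow hr1 ν w).trans_isLittleO <|
    (isLittleO_pow_pow_of_lt_left (by positivity) hrates).trans_isBigO (ha.isBigO_pow_smul hr1 μ hv)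

theorem isLittleO_atTop (ha : HasSubexponentialGrowth a) (hha : Commute h a)
    (hv : v ∈ Module.End.eigenspace (h : V →ₗ[𝕜] V) μ) (hv0 : v ≠ 0)
    (hw : w ∈ Module.End.eigenspace (h : V →ₗ[𝕜] V) ν) (hνμ : ‖ν‖ < ‖μ‖) :
    (fun t : ℤ => ((h * a) ^ t) w) =o[atTop] fun t => ((h * a) ^ t) v := by
  rw [← Nat.map_cast_int_atTop, isLittleO_map]
  simpa only [Function.comp_def, zpow_natCast, mul_pow_apply_of_mem_eigenspace hha _ hv,
    mul_pow_apply_of_mem_eigenspace hha _ hw] using ha.isLittleO_smul_pow hνμ hv0 w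

theorem isLittleO_atBot (ha : HasSubexponentialGrowth a) (hha : Commute h a)
    (hv : v ∈ Module.End.eigenspace (h : V →ₗ[𝕜] V) μ) (hv0 : v ≠ 0)
    (hw : w ∈ Module.End.eigenspace (h : V →ₗ[𝕜] V) ν) (hμν : ‖μ‖ < ‖ν‖) :
    (fun t : ℤ => ((h * a) ^ t) w) =o[atBot] fun t => ((h * a) ^ t) v := by
  have hμ : μ ≠ 0 := by
    rintro rfl
    exact hv0 (by simpa using hv)
  have hinv : ‖ν⁻¹‖ < ‖μ⁻¹‖ := by
    rw [norm_inv, norm_inv]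
    exact inv_strictAnti₀ (norm_pos_iff.2 hμ) hμν
  have hneg := (ha.inv.isLittleO_atTop hha.inv_inv (mem_eigenspace_inv hv) hv0
    (mem_eigenspace_inv hw) hinv).comp_tendsto tendsto_neg_atBot_atTop
  simpa only [Function.comp_def, ← mul_inv_rev, ← hha.eq, inv_zpow', neg_neg] using hneg

variable {ι : Type*} [LinearOrder ι] {l : ι → 𝕜}

theorem isDominatedSplitting_atTop (ha : HasSubexponentialGrowth a) (hha : Commute h a)
    (hl : StrictAnti fun k => ‖l k‖)
    (hdiag : ⨆ k, Module.End.eigenspace (h : V →ₗ[𝕜] V) (l k) = ⊤) :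
    IsDominatedSplitting atTop (h * a)
      fun k => Module.End.eigenspace (h : V →ₗ[𝕜] V) (l k) where
  indep := (Module.End.eigenspaces_iSupIndep _).comp (Function.Injective.of_comp hl.injective)
  iSup_eq_top := hdiag
  zpow_mem _ t _ := zpow_apply_mem_eigenspace ((Commute.refl h).mul_right hha) t
  isLittleO hik _ _ hv hv0 hw := ha.isLittleO_atTop hha hv hv0 hw (hl hik)

theorem isDominatedSplitting_atBot (ha : HasSubexponentialGrowth a) (hha : Commute h a)
    (hl : StrictAnti fun k => ‖l k‖)
    (hdiag : ⨆ k, Module.End.eigenspace (h : V →ₗ[𝕜] V) (l k) = ⊤) :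
    IsDominatedSplitting atBot (h * a)
      ((fun k => Module.End.eigenspace (h : V →ₗ[𝕜] V) (l k)) ∘ OrderDual.ofDual) where
  indep := (ha.isDominatedSplitting_atTop hha hl hdiag).indep
  iSup_eq_top := hdiag
  zpow_mem k t _ := (ha.isDominatedSplitting_atTop hha hl hdiag).zpow_mem (OrderDual.ofDual k) t _
  isLittleO hik _ _ hv hv0 hw := ha.isLittleO_atBot hha hv hv0 hw (hl hik)

end HasSubexponentialGrowth

section RealSpectrum

variable {V : Type*} [NormedAddCommGroup V] [NormedSpace ℝ V] [FiniteDimensional ℝ V]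

theorem hasSubexponentialGrowth_of_spectrum_subset_circle {a : V ≃ₗ[ℝ] V}
    (ha : ∀ μ ∈ spectrum ℂ (LinearMap.baseChange ℂ (a : V →ₗ[ℝ] V)), ‖μ‖ = 1) :
    HasSubexponentialGrowth a := by
  have hpow (b : V ≃ₗ[ℝ] V) (n : ℕ) (v : V) : ((b : V →ₗ[ℝ] V) ^ n) v = (b ^ n) v :=
    LinearMap.congr_fun (map_pow LinearEquiv.automorphismGroup.toLinearMapMonoidHom b n).symm v
  intro r hr
  obtain ⟨C, hC⟩ := exists_norm_pow_apply_le_of_spectrum_baseChange (fun μ hμ => (ha μ hμ).le) hr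
  obtain ⟨C', hC'⟩ := exists_norm_pow_apply_le_of_spectrum_baseChange
    (f := ((a⁻¹ : V ≃ₗ[ℝ] V) : V →ₗ[ℝ] V))
    (fun μ hμ => (by simpa using ha _ (inv_mem_spectrum_baseChange_iff.2 hμ) : ‖μ‖ = 1).le) hr
  refine ⟨max C C', fun t v => ?_⟩
  obtain ⟨n, rfl | rfl⟩ := t.eq_nat_or_neg
  · calc ‖(a ^ (n : ℤ)) v‖ ≤ C * r ^ n * ‖v‖ := by simpa only [zpow_natCast, hpow] using hC n v
      _ ≤ max C C' * r ^ (n : ℤ).natAbs * ‖v‖ := by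
        rw [Int.natAbs_natCast]
        gcongr
        exact le_max_left C C'
  · calc ‖(a ^ (-n : ℤ)) v‖ ≤ C' * r ^ n * ‖v‖ := by
          simpa only [← inv_zpow', zpow_natCast, hpow] using hC' n v
      _ ≤ max C C' * r ^ (-n : ℤ).natAbs * ‖v‖ := by
        rw [Int.natAbs_neg, Int.natAbs_natCast]
        gcongr
        exact le_max_right C C'

theorem hasSubexponentialGrowth_mul_of_isNilpotent_sub_one {e u : V ≃ₗ[ℝ] V}
    (he : ∀ μ ∈ spectrum ℂ (LinearMap.baseChange ℂ (e : V →ₗ[ℝ] V)), ‖μ‖ = 1)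
    (heu : Commute (e : V →ₗ[ℝ] V) (u : V →ₗ[ℝ] V)) (hu : IsNilpotent ((u : V →ₗ[ℝ] V) - 1)) :
    HasSubexponentialGrowth (e * u) :=
  hasSubexponentialGrowth_of_spectrum_subset_circle fun μ hμ =>
    he μ (spectrum_baseChange_mul_subset heu hu hμ)

end RealSpectrum

theorem eigenspaces_morse_decomposition_general
    {𝕜 V : Type*} [RCLike 𝕜] [NormedAddCommGroup V] [NormedSpace 𝕜 V] [FiniteDimensional 𝕜 V]
    {h a : V ≃ₗ[𝕜] V} (hha : Commute h a) (ha : HasSubexponentialGrowth a)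
    {n : ℕ} {l : Fin n → 𝕜} (hl : StrictAnti fun k => ‖l k‖)
    (hdiag : ⨆ k : Fin n, Module.End.eigenspace (h : V →ₗ[𝕜] V) (l k) = ⊤) :
    (∀ k, Submodule.map ((h * a : V ≃ₗ[𝕜] V) : V →ₗ[𝕜] V)
        (Module.End.eigenspace (h : V →ₗ[𝕜] V) (l k)) =
      Module.End.eigenspace (h : V →ₗ[𝕜] V) (l k)) ∧
    IsMorseDecomposition (projFlow (h * a))
      (fun k : Fin n =>
        {p : ℙ 𝕜 V | p.rep ∈ Module.End.eigenspace (h : V →ₗ[𝕜] V) (l k)}) ∧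
    (∀ i : Fin n,
      {p : ℙ 𝕜 V | omegaLimit atTop (projFlow (h * a)) {p} ⊆
          {q : ℙ 𝕜 V | q.rep ∈ Module.End.eigenspace (h : V →ₗ[𝕜] V) (l i)}} =
        {p : ℙ 𝕜 V |
          p.rep ∈ (⨆ k ≥ i, Module.End.eigenspace (h : V →ₗ[𝕜] V) (l k)) ∧
          p.rep ∉ (⨆ k > i, Module.End.eigenspace (h : V →ₗ[𝕜] V) (l k))}) := by
  have hTop := ha.isDominatedSplitting_atTop hha hl hdiag
  have hBot := ha.isDominatedSplitting_atBot hha hl hdiag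
  exact ⟨hTop.map_eq, hTop.isMorseDecomposition hBot,
    fun i => Set.ext fun p => hTop.omegaLimit_subset_iff⟩

/-- Let `g = e h u` be the multiplicative Jordan decomposition of
`g ∈ GL(V)` and `V = V_{λ₁} ⊕ ⋯ ⊕ V_{λ_n}` the eigenspace decomposition of `h`, with
`λ₁ > ⋯ > λ_n > 0`.  Then each `V_{λ_k}` is `g`-invariant, the projectivized eigenspaces
`ℙ(V_{λ_k})` form a Morse decomposition of the induced flow on `ℙ(V)`, and the stable set
of `ℙ(V_{λ_i})` is `{[v_i + ⋯ + v_n] : v_k ∈ V_{λ_k}, v_i ≠ 0}`. -/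
theorem eigenspaces_morse_decomposition
    {V : Type*} [NormedAddCommGroup V] [NormedSpace ℝ V] [FiniteDimensional ℝ V]
    (g e h u : V ≃ₗ[ℝ] V) (hg : g = e * h * u)
    (heh : Commute (e : V →ₗ[ℝ] V) (h : V →ₗ[ℝ] V))
    (heu : Commute (e : V →ₗ[ℝ] V) (u : V →ₗ[ℝ] V))
    (hhu : Commute (h : V →ₗ[ℝ] V) (u : V →ₗ[ℝ] V))
    (he : Module.End.IsSemisimple (LinearMap.baseChange ℂ (e : V →ₗ[ℝ] V)) ∧
      ∀ μ ∈ spectrum ℂ (LinearMap.baseChange ℂ (e : V →ₗ[ℝ] V)), ‖μ‖ = 1)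
    (hu : IsNilpotent ((u : V →ₗ[ℝ] V) - 1))
    (n : ℕ) (l : Fin n → ℝ) (hl : StrictAnti l) (hlpos : ∀ k, 0 < l k)
    (hdiag : ⨆ k : Fin n, Module.End.eigenspace (h : V →ₗ[ℝ] V) (l k) = ⊤) :
    (∀ k, Submodule.map (g : V →ₗ[ℝ] V)
        (Module.End.eigenspace (h : V →ₗ[ℝ] V) (l k)) =
      Module.End.eigenspace (h : V →ₗ[ℝ] V) (l k)) ∧
    IsMorseDecomposition (projFlow g)
      (fun k : Fin n =>
        {p : ℙ ℝ V | p.rep ∈ Module.End.eigenspace (h : V →ₗ[ℝ] V) (l k)}) ∧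
    (∀ i : Fin n,
      {p : ℙ ℝ V | omegaLimit atTop (projFlow g) {p} ⊆
          {q : ℙ ℝ V | q.rep ∈ Module.End.eigenspace (h : V →ₗ[ℝ] V) (l i)}} =
        {p : ℙ ℝ V |
          p.rep ∈ (⨆ k ≥ i, Module.End.eigenspace (h : V →ₗ[ℝ] V) (l k)) ∧
          p.rep ∉ (⨆ k > i, Module.End.eigenspace (h : V →ₗ[ℝ] V) (l k))}) := by
  have heh' : Commute e h := LinearEquiv.toLinearMap_injective heh
  have hhu' : Commute h u := LinearEquiv.toLinearMap_injective hhu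
  rw [hg, heh'.eq, mul_assoc]
  exact eigenspaces_morse_decomposition_general (heh'.symm.mul_right hhu')
    (hasSubexponentialGrowth_mul_of_isNilpotent_sub_one he.2 heu hu)
    (by simpa only [Real.norm_of_nonneg (hlpos _).le] using hl) hdiag
end
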